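/- Let E(x) = S(x) − (π²/2)x. Then limsup_{x→∞} E(x)/x^{1/2} = +∞; that is, for every real C there exist arbitrarily large x with E(x) > C·x^{1/2}. -/

import Mathlib

open Real

/-- `r₂(m)`: the number of representations of `m` as a sum of two squares of integers. -/
noncomputable def r2 (m : ℕ) : ℕ :=
  Set.ncard {p : ℤ × ℤ | p.1 ^ 2 + p.2 ^ 2 = (m : ℤ)}

/-- `S(x)`: the number of integer points `(a,b,w)` with `(a²+b²)² + w² < x`. -/
noncomputable def S (x : ℝ) : ℕ :=
  Set.ncard {p : ℤ × ℤ × ℤ |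
    (((p.1 : ℝ) ^ 2 + (p.2.1 : ℝ) ^ 2) ^ 2 + (p.2.2 : ℝ) ^ 2) < x}

/-- `E(x) = S(x) - (π²/2)·x`. -/
noncomputable def E (x : ℝ) : ℝ := (S x : ℝ) - (Real.pi ^ 2 / 2) * x

section
open Real MeasureTheory Set

lemma B_CS {a b : ℝ} (ha : 0 < a) (hb : 0 < b) :
    ∫⁻ s in Ioi (0:ℝ), ENNReal.ofReal (exp (-(a*s-b/s)^2)) = ENNReal.ofReal (√π/(2*a)) := by
  set J := ∫⁻ s in Ioi (0:ℝ), ENNReal.ofReal (exp (-(a*s-b/s)^2)) with hJ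
  have h1 : ENNReal.ofReal (√π) = ∫⁻ s in Ioi (0:ℝ), ENNReal.ofReal |a + b/s^2| * ENNReal.ofReal (exp (-(a*s-b/s)^2)) := by
    have himg : (fun s : ℝ => a*s - b/s) '' (Ioi 0) = univ := by
      rw [eq_univ_iff_forall]
      intro x
      have hD : |x| < √(x^2 + 4*a*b) := by
        rw [← Real.sqrt_sq_eq_abs]
        apply Real.sqrt_lt_sqrt (sq_nonneg _)
        nlinarith [mul_pos ha hb]
      have hD2 : (√(x^2 + 4*a*b))^2 = x^2 + 4*a*b := Real.sq_sqrt (by nlinarith [mul_pos ha hb, sq_nonneg x])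
      have hpos : 0 < x + √(x^2 + 4*a*b) := by
        have := neg_abs_le x
        linarith
      refine ⟨(x + √(x^2+4*a*b))/(2*a), by simp only [mem_Ioi]; positivity, ?_⟩
      set D := √(x^2 + 4*a*b)
      simp only
      field_simp
      nlinarith
    have hinj : InjOn (fun s : ℝ => a*s - b/s) (Ioi 0) := by
      apply StrictMonoOn.injOn
      intro s hs t ht hst
      simp only [mem_Ioi] at hs ht
      have : b/t < b/s := div_lt_div_of_pos_left hb hs hst
      have : a*s < a*t := mul_lt_mul_of_pos_left hst ha
      simp only
      linarith
    have := lintegral_image_eq_lintegral_abs_deriv_mul (s := Ioi (0:ℝ)) (f := fun s => a*s - b/s) (f' := fun s => a + b/s^2)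
      measurableSet_Ioi ?_ hinj (fun x => ENNReal.ofReal (exp (-x^2)))
    · rw [← this, himg, Measure.restrict_univ, ← ofReal_integral_eq_lintegral_ofReal]
      · have := integral_gaussian 1
        simp only [neg_mul, one_mul, div_one] at this
        rw [this]
      · simpa using integrable_exp_neg_mul_sq (b := 1) one_pos
      · exact Filter.Eventually.of_forall fun x => (exp_pos _).le
    · intro s hs
      have hs' : s ≠ 0 := (ne_of_gt hs)
      have h := ((hasDerivAt_id s).const_mul a).sub ((hasDerivAt_const s b).div (hasDerivAt_id s) hs')
      refine (HasDerivAt.congr_deriv (f := fun s => a*s - b/s) h ?_).hasDerivWithinAt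
      simp [neg_div]
  have h2 : J = ∫⁻ s in Ioi (0:ℝ), ENNReal.ofReal |-(b/(a*s^2))| * ENNReal.ofReal (exp (-(a*s-b/s)^2)) := by
    have himg : (fun s : ℝ => b/(a*s)) '' (Ioi 0) = Ioi 0 := by
      ext x
      simp only [mem_image, mem_Ioi]
      constructor
      · rintro ⟨s, hs, rfl⟩; positivity
      · intro hx
        refine ⟨b/(a*x), by positivity, ?_⟩
        field_simp
    have hinj : InjOn (fun s : ℝ => b/(a*s)) (Ioi 0) := by
      intro s hs t ht hst
      simp only [mem_Ioi] at hs ht hst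
      field_simp at hst
      exact hst.symm
    have := lintegral_image_eq_lintegral_abs_deriv_mul (s := Ioi (0:ℝ)) (f := fun s => b/(a*s)) (f' := fun s => -(b/(a*s^2)))
      measurableSet_Ioi ?_ hinj (fun x => ENNReal.ofReal (exp (-(a*x-b/x)^2)))
    · rw [himg] at this
      rw [hJ, this]
      apply setLIntegral_congr_fun measurableSet_Ioi
      intro s hs
      simp only [mem_Ioi] at hs
      simp only
      congr 4
      have : a * (b/(a*s)) - b/(b/(a*s)) = -(a*s - b/s) := by field_simp; ring
      rw [this, neg_sq]
    · intro s hs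
      have hs' : s ≠ 0 := (ne_of_gt hs)
      have h := ((hasDerivAt_const s b).div ((hasDerivAt_id s).const_mul a) (by simp [hs', ha.ne']))
      refine (HasDerivAt.congr_deriv (f := fun s => b/(a*s)) h ?_).hasDerivWithinAt
      simp
      field_simp
  have h3 : ENNReal.ofReal (√π) = ENNReal.ofReal (2*a) * J := by
    have e2 : ENNReal.ofReal (2*a) * J = ENNReal.ofReal a * J + ENNReal.ofReal a * J := by
      rw [← add_mul, ← ENNReal.ofReal_add ha.le ha.le]; ring_nf
    rw [e2]
    conv_rhs => 
      enter [2]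
      rw [h2]
    rw [hJ, h1, ← lintegral_const_mul _ (by fun_prop), ← lintegral_const_mul _ (by fun_prop),
      ← lintegral_add_left (by fun_prop)]
    apply setLIntegral_congr_fun measurableSet_Ioi
    intro s hs
    simp only [mem_Ioi] at hs
    simp only
    rw [← mul_assoc, ← add_mul]
    congr 1
    rw [← ENNReal.ofReal_mul ha.le, ← ENNReal.ofReal_add ha.le (by positivity), abs_neg, abs_of_pos (by positivity), abs_of_pos (by positivity)]
    congr 1
    field_simp
  have h4 : ENNReal.ofReal (2*a) ≠ 0 := by simpa using ha
  rw [ENNReal.ofReal_div_of_pos (by positivity), h3, mul_comm, ENNReal.mul_div_cancel_right h4 ENNReal.ofReal_ne_top]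

lemma B_sub {a t : ℝ} (ha : 0 < a) (ht : 0 < t) :
    ENNReal.ofReal (exp (-a*t)) = ENNReal.ofReal (2*a/√π) * 
      ∫⁻ s in Ioi (0:ℝ), ENNReal.ofReal (exp (-(a^2*s^2) - t^2/(4*s^2))) := by
  have h := B_CS ha (half_pos ht)
  have e : ∫⁻ s in Ioi (0:ℝ), ENNReal.ofReal (exp (-(a^2*s^2) - t^2/(4*s^2))) = 
     ENNReal.ofReal (exp (-a*t)) * ∫⁻ s in Ioi (0:ℝ), ENNReal.ofReal (exp (-(a*s-t/2/s)^2)) := by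
    rw [← lintegral_const_mul _ (by fun_prop)]
    apply setLIntegral_congr_fun measurableSet_Ioi
    intro s hs
    simp only [mem_Ioi] at hs
    simp only
    rw [← ENNReal.ofReal_mul (exp_pos _).le, ← Real.exp_add]
    congr 2
    field_simp
    ring
  rw [e, h, ← ENNReal.ofReal_mul (exp_pos _).le, ← ENNReal.ofReal_mul (by positivity)]
  congr 1
  have : √π ≠ 0 := by positivity
  field_simp


lemma B_gauss {b : ℝ} (hb : 0 < b) (k : ℕ) :
    ∫⁻ x in Ioi (0:ℝ), ENNReal.ofReal (x^k * exp (-b*x^2)) =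
      ENNReal.ofReal (b ^ (-((k:ℝ)+1)/2) * (1/2) * Real.Gamma (((k:ℝ)+1)/2)) := by
  have hk : (-1:ℝ) < k := by have : (0:ℝ) ≤ k := Nat.cast_nonneg k
                             linarith
  have h := integral_rpow_mul_exp_neg_mul_rpow (p := 2) (q := k) two_pos hk hb
  have hi := integrableOn_rpow_mul_exp_neg_mul_sq hb hk
  rw [← h, ofReal_integral_eq_lintegral_ofReal]
  · simp
  · simpa [IntegrableOn] using hi
  · refine (ae_restrict_mem measurableSet_Ioi).mono fun x hx => ?_
    simp only [mem_Ioi] at hx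
    simp only [Pi.zero_apply]
    positivity

lemma B_x2 {s : ℝ} (hs : 0 < s) :
    ∫⁻ x in Ioi (0:ℝ), ENNReal.ofReal (x^2 * exp (-x^2/(4*s^2))) = ENNReal.ofReal (2*√π*s^3) := by
  have h := B_gauss (b := 1/(4*s^2)) (by positivity) 2
  have e : ∀ x : ℝ, -(1/(4*s^2))*x^2 = -x^2/(4*s^2) := fun x => by ring
  simp only [e] at h
  rw [h]
  congr 1
  have g : Real.Gamma (3/2) = √π/2 := by
    rw [show (3/2:ℝ) = 1/2 + 1 by norm_num, Real.Gamma_add_one (by norm_num), Real.Gamma_one_half_eq]; ring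
  have p : (1/(4*s^2)) ^ (-(3:ℝ)/2) = 8*s^3 := by
    rw [show 1/(4*s^2) = (2*s)^(-2:ℝ) by
      rw [Real.rpow_neg (by positivity), show (2:ℝ) = ((2:ℕ):ℝ) by norm_num, Real.rpow_natCast]; push_cast; rw [one_div]; ring]
    rw [← Real.rpow_mul (by positivity), show (-2 * (-3/2) : ℝ) = ((3:ℕ):ℝ) by norm_num, Real.rpow_natCast]; ring
  push_cast
  rw [show ((2:ℝ)+1) = 3 by norm_num, g, p]; ring

lemma B_x5 {c : ℝ} (hc : 0 < c) :
    ∫⁻ x in Ioi (0:ℝ), ENNReal.ofReal (x^5 * exp (-c*x^2)) = ENNReal.ofReal (1/c^3) := by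
  rw [B_gauss hc 5]
  congr 1
  push_cast
  rw [show ((5:ℝ)+1)/2 = 2+1 by norm_num, show (-((5:ℝ)+1)/2) = -((3:ℕ):ℝ) by norm_num, Real.rpow_neg hc.le,
    Real.rpow_natCast, Real.Gamma_add_one two_ne_zero, Real.Gamma_two]
  field_simp

lemma B_inner {n s : ℝ} (hn : 0 ≤ n) (hs : 0 < s) :
    ∫⁻ t in Ioi (0:ℝ), ENNReal.ofReal (t * √(t^2-n) * exp (-t^2/(4*s^2))) = 
      ENNReal.ofReal (2*√π*s^3* exp (-n/(4*s^2))) := by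
  have hsub : Ioi (√n) ⊆ Ioi (0:ℝ) := Ioi_subset_Ioi (Real.sqrt_nonneg n)
  have himg : (fun x : ℝ => √(x^2+n)) '' (Ioi 0) = Ioi (√n) := by
    ext t
    simp only [mem_image, mem_Ioi]
    constructor
    · rintro ⟨x, hx, rfl⟩
      apply Real.sqrt_lt_sqrt hn
      nlinarith [pow_pos hx 2]
    · intro ht
      have ht0 : 0 < t := lt_of_le_of_lt (Real.sqrt_nonneg n) ht
      have h2 : n < t^2 := (Real.sqrt_lt' ht0).1 ht
      refine ⟨√(t^2-n), Real.sqrt_pos.2 (by linarith), ?_⟩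
      rw [Real.sq_sqrt (by linarith), sub_add_cancel, Real.sqrt_sq ht0.le]
  have hinj : InjOn (fun x : ℝ => √(x^2+n)) (Ioi 0) := by
    apply StrictMonoOn.injOn
    intro x hx y hy hxy
    simp only [mem_Ioi] at hx hy
    apply Real.sqrt_lt_sqrt (by positivity)
    nlinarith
  have hz : ∫⁻ t in Ioi (0:ℝ), ENNReal.ofReal (t * √(t^2-n) * exp (-t^2/(4*s^2))) = 
     ∫⁻ t in Ioi (√n), ENNReal.ofReal (t * √(t^2-n) * exp (-t^2/(4*s^2))) := by
    rw [← lintegral_indicator measurableSet_Ioi, ← lintegral_indicator measurableSet_Ioi]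
    congr 1; ext t
    by_cases h1 : t ∈ Ioi (√n)
    · rw [indicator_of_mem h1, indicator_of_mem (hsub h1)]
    · rw [indicator_of_notMem h1]
      by_cases h0 : t ∈ Ioi (0:ℝ)
      · rw [indicator_of_mem h0]
        simp only [mem_Ioi, not_lt] at h0 h1
        have : t^2 ≤ n := (Real.le_sqrt' h0).1 h1
        rw [Real.sqrt_eq_zero_of_nonpos (by linarith)]; simp
      · rw [indicator_of_notMem h0]
  rw [hz, ← himg, lintegral_image_eq_lintegral_abs_deriv_mul (f' := fun x => x/√(x^2+n)) measurableSet_Ioi ?_ hinj]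
  · rw [ENNReal.ofReal_mul (by positivity), mul_comm (ENNReal.ofReal (2*√π*s^3)), ← B_x2 hs, ← lintegral_const_mul _ (by fun_prop)]
    apply setLIntegral_congr_fun measurableSet_Ioi
    intro x hx
    simp only [mem_Ioi] at hx
    have h0 : 0 < √(x^2+n) := Real.sqrt_pos.2 (by positivity)
    simp only
    rw [← ENNReal.ofReal_mul (abs_nonneg _), ← ENNReal.ofReal_mul (by positivity), abs_of_pos (by positivity)]
    congr 1
    rw [Real.sq_sqrt (by positivity), add_sub_cancel_right, Real.sqrt_sq hx.le,
      show -(x^2+n)/(4*s^2) = -n/(4*s^2) + -x^2/(4*s^2) by ring, Real.exp_add]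
    field_simp
  · intro x hx
    simp only [mem_Ioi] at hx
    have h := (((hasDerivAt_pow 2 x).add_const n).sqrt (by positivity))
    refine (h.congr_deriv ?_).hasDerivWithinAt
    field_simp
    simp

lemma B_term {n a : ℝ} (hn : 0 ≤ n) (ha : 0 < a) :
    ∫⁻ t in Ioi (0:ℝ), ENNReal.ofReal (t * √(t^2-n) * exp (-a*t)) = 
      ∫⁻ s in Ioi (0:ℝ), ENNReal.ofReal (4*a*s^3*exp (-(a^2*s^2))) * ENNReal.ofReal (exp (-n/(4*s^2))) := by
  have e1 : ∫⁻ t in Ioi (0:ℝ), ENNReal.ofReal (t * √(t^2-n) * exp (-a*t)) = 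
    ∫⁻ t in Ioi (0:ℝ), ∫⁻ s in Ioi (0:ℝ), ENNReal.ofReal (2*a/√π) * (ENNReal.ofReal (exp (-(a^2*s^2))) *
       ENNReal.ofReal (t * √(t^2-n) * exp (-t^2/(4*s^2)))) := by
    apply setLIntegral_congr_fun measurableSet_Ioi
    intro t ht
    simp only [mem_Ioi] at ht
    simp only
    rw [ENNReal.ofReal_mul (by positivity), B_sub ha ht, ← lintegral_const_mul _ (by fun_prop), ← lintegral_const_mul _ (by fun_prop)]
    apply setLIntegral_congr_fun measurableSet_Ioi
    intro s hs
    simp only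
    rw [← ENNReal.ofReal_mul (by positivity), ← ENNReal.ofReal_mul (by positivity), ← ENNReal.ofReal_mul (by positivity), ← ENNReal.ofReal_mul (by positivity),
      sub_eq_add_neg (-(a^2*s^2)), Real.exp_add]
    congr 1
    rw [neg_div]
    ring
  rw [e1, lintegral_lintegral_swap (by fun_prop)]
  apply setLIntegral_congr_fun measurableSet_Ioi
  intro s hs
  simp only [mem_Ioi] at hs
  simp only
  rw [lintegral_const_mul _ (by fun_prop), lintegral_const_mul _ (by fun_prop), B_inner hn hs]
  rw [← ENNReal.ofReal_mul (by positivity), ← ENNReal.ofReal_mul (by positivity), ← ENNReal.ofReal_mul (by positivity)]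
  congr 1
  have : √π ≠ 0 := by positivity
  field_simp
  ring

/-- squared norm of a lattice point -/
noncomputable def nsq (v : ℤ × ℤ) : ℝ := (v.1:ℝ)^2 + (v.2:ℝ)^2

lemma nsq_nonneg (v : ℤ × ℤ) : 0 ≤ nsq v := by unfold nsq; positivity

lemma B_theta1 {c : ℝ} (hc : 0 < c) : Summable (fun n : ℤ => exp (-c * (n:ℝ)^2)) := by
  refine (summable_pow_mul_jacobiTheta₂_term_bound 0 (T := c/π) (by positivity) 0).congr fun n => ?_
  have := Real.pi_ne_zero
  simp
  field_simp

lemma B_theta2 {c : ℝ} (hc : 0 < c) : ∑' v : ℤ × ℤ, ENNReal.ofReal (exp (-c * nsq v)) = 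
    ENNReal.ofReal ((∑' n : ℤ, exp (-c * (n:ℝ)^2))^2) := by
  have hs := B_theta1 hc
  rw [sq, ENNReal.ofReal_mul (tsum_nonneg fun _ => (exp_pos _).le), ENNReal.ofReal_tsum_of_nonneg (fun _ => (exp_pos _).le) hs,
    ENNReal.tsum_prod', ← ENNReal.tsum_mul_right]
  congr 1; ext a
  rw [← ENNReal.tsum_mul_left]
  congr 1; ext b
  rw [← ENNReal.ofReal_mul (exp_pos _).le, ← Real.exp_add]
  congr 2
  unfold nsq; ring

lemma B_theta {s : ℝ} (hs : 0 < s) : ∑' v : ℤ × ℤ, ENNReal.ofReal (exp (-nsq v/(4*s^2))) = 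
    ENNReal.ofReal (4*π*s^2) * ∑' v : ℤ × ℤ, ENNReal.ofReal (exp (-(4*π^2*s^2) * nsq v)) := by
  have e : ∀ v, -nsq v/(4*s^2) = -(1/(4*s^2)) * nsq v := fun v => by ring
  simp only [e]
  rw [B_theta2 (by positivity), B_theta2 (by positivity), ← ENNReal.ofReal_mul (by positivity)]
  congr 1
  have h := Real.tsum_exp_neg_mul_int_sq (a := 4*π*s^2) (by positivity)
  have e1 : ∀ n : ℤ, -π * (4*π*s^2) * (n:ℝ)^2 = -(4*π^2*s^2) * (n:ℝ)^2 := fun n => by ring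
  have e2 : ∀ n : ℤ, -π / (4*π*s^2) * (n:ℝ)^2 = -(1/(4*s^2)) * (n:ℝ)^2 := fun n => by
    have := Real.pi_ne_zero
    field_simp
  simp only [e1, e2] at h
  rw [h, mul_pow, div_pow, ← Real.sqrt_eq_rpow, Real.sq_sqrt (by positivity)]
  field_simp

lemma B_main {a : ℝ} (ha : 0 < a) :
    ∑' v : ℤ × ℤ, ∫⁻ t in Ioi (0:ℝ), ENNReal.ofReal (t * √(t^2-nsq v) * exp (-a*t)) = 
    ∑' v : ℤ × ℤ, ENNReal.ofReal (16*π*a/(a^2+4*π^2*nsq v)^3) := by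
  have r : ∀ v, ENNReal.ofReal (16*π*a/(a^2+4*π^2*nsq v)^3) = 
      ∫⁻ s in Ioi (0:ℝ), ENNReal.ofReal (16*π*a) * ENNReal.ofReal (s^5 * exp (-(a^2+4*π^2*nsq v)*s^2)) := fun v => by
    have := nsq_nonneg v
    rw [lintegral_const_mul _ (by fun_prop), B_x5 (by positivity), ← ENNReal.ofReal_mul (by positivity)]
    congr 1; ring
  simp only [r]
  simp only [fun v => B_term (nsq_nonneg v) ha]
  rw [← lintegral_tsum (fun _ => by fun_prop), ← lintegral_tsum (fun _ => by fun_prop)]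
  apply setLIntegral_congr_fun measurableSet_Ioi
  intro s hs
  simp only [mem_Ioi] at hs
  simp only
  rw [ENNReal.tsum_mul_left, B_theta hs, ← ENNReal.tsum_mul_left, ← ENNReal.tsum_mul_left]
  congr 1; ext v
  rw [← ENNReal.ofReal_mul (by positivity), ← ENNReal.ofReal_mul (by positivity), ← ENNReal.ofReal_mul (by positivity)]
  congr 1
  rw [show -(a^2+4*π^2*nsq v)*s^2 = -(a^2*s^2) + -(4*π^2*s^2)*nsq v by ring, Real.exp_add]
  ring

end

section
open Real MeasureTheory Set

lemma C_int {f : ℝ → ℝ} (hf : Measurable f) (hf0 : ∀ t > 0, 0 ≤ f t) {a g : ℝ}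
    (h : ∫⁻ t in Ioi (0:ℝ), ENNReal.ofReal (f t * exp (-a*t)) = ENNReal.ofReal g) :
    IntegrableOn (fun t => f t * exp (-a*t)) (Ioi 0) := by
  refine ⟨by fun_prop, ?_⟩
  rw [hasFiniteIntegral_iff_ofReal]
  · rw [h]; exact ENNReal.ofReal_lt_top
  · refine (ae_restrict_mem measurableSet_Ioi).mono fun x hx => ?_
    exact mul_nonneg (hf0 x hx) (exp_pos _).le

lemma C_cont {f : ℝ → ℝ} (hf : Measurable f) (hf0 : ∀ t > 0, 0 ≤ f t) {g : ℝ → ℝ} {G : ℂ → ℂ}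
    (hG : DifferentiableOn ℂ G {z | 0 < z.re}) (hg0 : ∀ a > 0, 0 ≤ g a) (hGg : ∀ a : ℝ, 0 < a → G a = g a)
    (h : ∀ a > 0, ∫⁻ t in Ioi (0:ℝ), ENNReal.ofReal (f t * exp (-a*t)) = ENNReal.ofReal (g a)) 
    {a : ℂ} (ha : 0 < a.re) :
    ∫ t in Ioi (0:ℝ), (f t : ℂ) * Complex.exp (-a*t) = G a := by
  set μ := (volume.restrict (Ioi (0:ℝ))).withDensity (fun t => ENNReal.ofReal (f t)) with hμ
  have hfm : Measurable (fun t => ENNReal.ofReal (f t)) := by fun_prop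
  have htop : ∀ᵐ t ∂(volume.restrict (Ioi (0:ℝ))), ENNReal.ofReal (f t) < ⊤ := 
    Filter.Eventually.of_forall fun t => ENNReal.ofReal_lt_top
  have hset : ∀ a > 0, -a ∈ ProbabilityTheory.integrableExpSet id μ := by
    intro a ha
    simp only [ProbabilityTheory.integrableExpSet, mem_ofPred_eq]
    rw [integrable_withDensity_iff_integrable_smul' hfm htop]
    refine (C_int hf hf0 (h a ha)).congr ?_
    refine (ae_restrict_mem measurableSet_Ioi).mono fun x hx => ?_
    simp [ENNReal.toReal_ofReal (hf0 x hx)]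
  have hIntg : Iio (0:ℝ) ⊆ interior (ProbabilityTheory.integrableExpSet id μ) := by
    apply interior_maximal _ isOpen_Iio
    intro x hx
    simpa using hset (-x) (by simpa using hx)
  have hval : ∀ z : ℂ, ProbabilityTheory.complexMGF id μ (-z) = ∫ t in Ioi (0:ℝ), (f t : ℂ) * Complex.exp (-z*t) := by
    intro z
    unfold ProbabilityTheory.complexMGF
    rw [integral_withDensity_eq_integral_toReal_smul hfm htop]
    apply setIntegral_congr_fun measurableSet_Ioi
    intro x hx
    simp [ENNReal.toReal_ofReal (hf0 x hx)]
  have hopen : IsOpen {z : ℂ | 0 < z.re} := isOpen_lt continuous_const Complex.continuous_re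
  have hA : AnalyticOnNhd ℂ (fun z => ProbabilityTheory.complexMGF id μ (-z)) {z | 0 < z.re} := by
    apply DifferentiableOn.analyticOnNhd _ hopen
    apply (ProbabilityTheory.differentiableOn_complexMGF (X := id) (μ := μ)).comp differentiableOn_id.neg
    intro z hz
    apply hIntg
    simpa using hz
  have hB := hG.analyticOnNhd hopen
  have hconn : IsPreconnected {z : ℂ | 0 < z.re} := (convex_halfSpace_re_gt 0).isPreconnected
  have hre : ∀ a : ℝ, 0 < a → ProbabilityTheory.complexMGF id μ (-(a:ℂ)) = G a := by
    intro a ha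
    rw [hval, hGg a ha]
    have : ∫ t in Ioi (0:ℝ), (f t : ℂ) * Complex.exp (-(a:ℂ)*t) = ((∫ t in Ioi (0:ℝ), f t * exp (-a*t) : ℝ) : ℂ) := by
      refine Eq.trans ?_ integral_complex_ofReal
      congr 1; ext t; push_cast; rfl
    rw [this, integral_eq_lintegral_of_nonneg_ae, h a ha, ENNReal.toReal_ofReal (hg0 a ha)]
    · refine (ae_restrict_mem measurableSet_Ioi).mono fun x hx => ?_
      exact mul_nonneg (hf0 x hx) (exp_pos _).le
    · fun_prop
  have key := hA.eqOn_of_preconnected_of_frequently_eq hB hconn (z₀ := 1) (by simp) ?_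
  · rw [← hval]; exact key ha
  · have ht : Filter.Tendsto (fun n : ℕ => ((1 + 1/((n:ℝ)+1) : ℝ) : ℂ)) Filter.atTop (nhdsWithin 1 {1}ᶜ) := by
      rw [tendsto_nhdsWithin_iff]
      constructor
      · have := (tendsto_one_div_add_atTop_nhds_zero_nat (𝕜 := ℝ)).const_add 1
        rw [add_zero] at this
        have h2 := (Complex.continuous_ofReal.tendsto 1).comp this
        simpa [Function.comp_def] using h2
      · refine Filter.Eventually.of_forall fun n => ?_
        simp only [mem_compl_iff, mem_singleton_iff]
        have : (0:ℝ) < 1/((n:ℝ)+1) := by positivity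
        intro h
        have h' : (1 + 1/((n:ℝ)+1) : ℝ) = 1 := by exact_mod_cast h
        linarith
    refine ht.frequently (Filter.Eventually.frequently (Filter.Eventually.of_forall fun n => ?_))
    exact hre _ (by positivity)

lemma C_pow (k : ℕ) {a : ℂ} (ha : 0 < a.re) :
    ∫ t in Ioi (0:ℝ), ((t^k : ℝ) : ℂ) * Complex.exp (-a*t) = k.factorial / a^(k+1) := by
  refine C_cont (f := fun t => t^k) (g := fun a => k.factorial / a^(k+1)) (G := fun a => k.factorial / a^(k+1)) (by fun_prop) (fun t ht => by positivity) ?_ 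
    (fun a ha => by positivity) (fun a ha => by push_cast; rfl) ?_ ha
  · intro z hz
    have : z ≠ 0 := by rintro rfl; simp at hz
    have h2 : z^(k+1) ≠ 0 := pow_ne_zero _ this
    apply DifferentiableAt.differentiableWithinAt
    fun_prop (disch := assumption)
  · intro a ha
    have h := Real.integral_rpow_mul_exp_neg_mul_Ioi (a := k+1) (r := a) (by positivity) ha
    have hi : IntegrableOn (fun t : ℝ => t^k * exp (-a*t)) (Ioi 0) := by
      have := integrableOn_rpow_mul_exp_neg_mul_rpow (s := k) (p := 1) (by have : (0:ℝ) ≤ k := Nat.cast_nonneg k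
                                                                           linarith) one_pos ha
      simpa using this
    rw [← ofReal_integral_eq_lintegral_ofReal hi]
    · congr 1
      rw [Real.Gamma_nat_eq_factorial] at h
      simp only [add_sub_cancel_right, Real.rpow_natCast] at h
      simp only [neg_mul]
      rw [h, show ((k:ℝ)+1) = ((k+1:ℕ):ℝ) by push_cast; rfl, Real.rpow_natCast, one_div, inv_pow]
      field_simp
    · refine (ae_restrict_mem measurableSet_Ioi).mono fun x hx => ?_
      simp only [mem_Ioi] at hx
      simp only [Pi.zero_apply]
      positivity

/-- truncated square-root sum over the lattice -/
noncomputable def NN (t : ℝ) : ℝ := ∑' v : ℤ × ℤ, √(t^2 - nsq v)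

lemma nsq_finite (y : ℝ) : {v : ℤ × ℤ | nsq v < y}.Finite := by
  refine (Set.finite_Icc ((-⌈|y|⌉, -⌈|y|⌉) : ℤ × ℤ) (⌈|y|⌉, ⌈|y|⌉)).subset ?_
  rintro ⟨p, q⟩ h
  simp only [mem_ofPred_eq, nsq] at h
  have h1 : y ≤ ⌈|y|⌉ := (le_abs_self y).trans (Int.le_ceil _)
  have h2 : p^2+q^2 < ⌈|y|⌉ := by
    have := h.trans_le h1
    exact_mod_cast this
  have h3 : ∀ z : ℤ, |z| ≤ z^2 := fun z => by
    rw [← sq_abs]; exact Int.le_self_sq |z|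
  have hp := abs_le.1 (h3 p)
  have hq := abs_le.1 (h3 q)
  simp only [mem_Icc, Prod.mk_le_mk]
  refine ⟨⟨?_, ?_⟩, ?_, ?_⟩ <;> nlinarith [sq_nonneg p, sq_nonneg q]

lemma NN_summable (t : ℝ) : Summable (fun v : ℤ × ℤ => √(t^2 - nsq v)) := by
  apply summable_of_hasFiniteSupport
  refine (nsq_finite (t^2)).subset fun v hv => ?_
  simp only [Function.mem_support] at hv
  simp only [mem_ofPred_eq]
  by_contra hc
  exact hv (Real.sqrt_eq_zero_of_nonpos (by linarith))

lemma NN_nonneg (t : ℝ) : 0 ≤ NN t := tsum_nonneg fun _ => Real.sqrt_nonneg _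

lemma NN_ofReal (t : ℝ) : ENNReal.ofReal (NN t) = ∑' v : ℤ × ℤ, ENNReal.ofReal (√(t^2 - nsq v)) :=
  ENNReal.ofReal_tsum_of_nonneg (fun _ => Real.sqrt_nonneg _) (NN_summable t)

lemma NN_meas : Measurable NN := by
  have : NN = fun t => (∑' v : ℤ × ℤ, ENNReal.ofReal (√(t^2 - nsq v))).toReal := by
    ext t
    rw [← NN_ofReal, ENNReal.toReal_ofReal (NN_nonneg t)]
  rw [this]
  apply Measurable.ennreal_toReal
  apply Measurable.ennreal_tsum
  intro v
  fun_prop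

lemma sum_lat : Summable (fun v : ℤ × ℤ => 1/(1+nsq v)^3) := by
  have h1 : Summable (fun n : ℤ => 1/(1+(n:ℝ)^2)) := by
    refine Summable.of_nonneg_of_le (fun n => by positivity) (fun n => ?_) 
      ((Real.summable_one_div_int_pow (p := 2)).2 one_lt_two |>.add (summable_of_finite_support (f := fun n : ℤ => if n = 0 then (1:ℝ) else 0) ?_))
    · by_cases h : n = 0
      · simp [h]
      · simp only [h, if_false, add_zero]
        have : (0:ℝ) < (n:ℝ)^2 := by positivity
        apply one_div_le_one_div_of_le this
        linarith
    · refine (Set.finite_singleton (0:ℤ)).subset fun n hn => ?_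
      by_contra hc
      simp at hc
      simp [hc] at hn
  have h2 := h1.mul_of_nonneg h1 (fun n => by positivity) (fun n => by positivity)
  refine Summable.of_nonneg_of_le (fun v => ?_) (fun v => ?_) h2
  · have := nsq_nonneg v
    positivity
  · have hv := nsq_nonneg v
    rw [one_div_mul_one_div]
    apply one_div_le_one_div_of_le (by positivity)
    unfold nsq at *
    nlinarith [sq_nonneg (v.1:ℝ), sq_nonneg (v.2:ℝ), mul_nonneg (sq_nonneg (v.1:ℝ)) (sq_nonneg (v.2:ℝ)), pow_nonneg hv 3, pow_nonneg hv 2]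

lemma C_fac (a : ℂ) {n : ℝ} (hn : 0 ≤ n) : a^2 + 4*π^2*(n:ℂ) = (a + ((2*π*√n:ℝ):ℂ) * Complex.I) * (a - ((2*π*√n:ℝ):ℂ) * Complex.I) := by
  have : ((√n:ℝ):ℂ)^2 = n := by exact_mod_cast Real.sq_sqrt hn
  push_cast
  ring_nf
  rw [Complex.I_sq, this]; ring

lemma C_low1 (a : ℂ) {n : ℝ} (hn : 0 ≤ n) : 4*π^2*n - ‖a‖^2 ≤ ‖a^2 + 4*π^2*(n:ℂ)‖ := by
  have h := norm_sub_norm_le (4*π^2*(n:ℂ)) (-(a^2))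
  have e : ‖(4*π^2*(n:ℂ))‖ = 4*π^2*n := by
    rw [show (4*π^2*(n:ℂ)) = ((4*π^2*n:ℝ):ℂ) by push_cast; rfl, Complex.norm_real, Real.norm_of_nonneg (by positivity)]
  rw [e, norm_neg, norm_pow, sub_neg_eq_add, add_comm] at h
  exact h

lemma C_low2 {a : ℂ} (ha : 0 ≤ a.re) {n : ℝ} (hn : 0 ≤ n) : a.re^2 ≤ ‖a^2 + 4*π^2*(n:ℂ)‖ := by
  rw [C_fac a hn, norm_mul, sq]
  apply mul_le_mul _ _ ha (norm_nonneg _)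
  · exact le_trans (by simp) (Complex.re_le_norm _)
  · exact le_trans (by simp) (Complex.re_le_norm _)

/-- combined lower bound -/
lemma C_comb {X δ R n : ℝ} (hδ : 0 < δ) (hn : 0 ≤ n) (h1 : δ ≤ X) (h2 : 4*π^2*n - R ≤ X) (hR : 0 ≤ R) :
    1/X^3 ≤ (1 + R/δ + 1/δ)^3 * (1/(1+n)^3) := by
  have hX : 0 < X := hδ.trans_le h1
  have h3 : 1 + n ≤ (1 + R/δ + 1/δ) * X := by
    have a1 : R ≤ R/δ * X := by
      rw [div_mul_eq_mul_div, le_div_iff₀ hδ]; exact mul_le_mul_of_nonneg_left h1 hR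
    have a2 : 1 ≤ 1/δ * X := by
      rw [div_mul_eq_mul_div, le_div_iff₀ hδ]; linarith
    have a3 : n ≤ 4*π^2*n := by nlinarith [Real.pi_gt_three, mul_nonneg hn (sq_nonneg (π-3)), mul_nonneg hn (sub_nonneg.2 Real.pi_gt_three.le)]
    nlinarith
  rw [mul_one_div, div_le_div_iff₀ (by positivity) (by positivity), one_mul, ← mul_pow]
  exact pow_le_pow_left₀ (by positivity) h3 3

noncomputable def GG (a : ℂ) : ℂ := 16*π*a * ∑' v : ℤ × ℤ, 1/(a^2+4*π^2*(nsq v:ℂ))^3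

lemma C_sum {a : ℂ} (ha : 0 < a.re) : Summable (fun v : ℤ × ℤ => 1/(a^2+4*π^2*(nsq v:ℂ))^3) := by
  apply Summable.of_norm
  refine Summable.of_nonneg_of_le (fun v => norm_nonneg _) (fun v => ?_) (sum_lat.mul_left ((1 + ‖a‖^2/a.re^2 + 1/a.re^2)^3))
  rw [norm_div, norm_one, norm_pow]
  exact C_comb (by positivity) (nsq_nonneg v) (C_low2 ha.le (nsq_nonneg v)) (C_low1 a (nsq_nonneg v)) (by positivity)

lemma GG_diff : DifferentiableOn ℂ GG {z | 0 < z.re} := by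
  intro a ha
  simp only [mem_ofPred_eq] at ha
  set U : Set ℂ := {z | a.re/2 < z.re} ∩ Metric.ball 0 (‖a‖+1) with hU
  have hUo : IsOpen U := (isOpen_lt continuous_const Complex.continuous_re).inter Metric.isOpen_ball
  have haU : a ∈ U := ⟨by simp only [mem_ofPred_eq]; linarith, by simp⟩
  have h : DifferentiableOn ℂ (fun a : ℂ => ∑' v : ℤ × ℤ, 1/(a^2+4*π^2*(nsq v:ℂ))^3) U := by
    apply Complex.differentiableOn_tsum_of_summable_norm (sum_lat.mul_left ((1 + (‖a‖+1)^2/(a.re/2)^2 + 1/(a.re/2)^2)^3)) _ hUo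
    · rintro v z ⟨hz1, hz2⟩
      simp only [mem_ofPred_eq] at hz1
      simp only [mem_ball_zero_iff] at hz2
      have l2 := C_low2 (a := z) (by linarith) (nsq_nonneg v)
      have l1 := C_low1 z (nsq_nonneg v)
      rw [norm_div, norm_one, norm_pow]
      apply C_comb (by positivity) (nsq_nonneg v) _ _ (by positivity)
      · refine le_trans ?_ l2
        apply pow_le_pow_left₀ (by positivity) hz1.le
      · refine le_trans ?_ l1
        have := pow_le_pow_left₀ (norm_nonneg z) hz2.le 2
        linarith
    · rintro v z ⟨hz1, hz2⟩
      simp only [mem_ofPred_eq] at hz1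
      have l2 := C_low2 (a := z) (by linarith) (nsq_nonneg v)
      have : (z^2+4*π^2*(nsq v:ℂ)) ≠ 0 := by
        rw [← norm_pos_iff]
        have : 0 < z.re^2 := by have : 0 < z.re := by linarith
                                positivity
        linarith
      have h3 := pow_ne_zero 3 this
      apply DifferentiableAt.differentiableWithinAt
      fun_prop (disch := assumption)
  have h' := h.differentiableAt (hUo.mem_nhds haU)
  apply DifferentiableAt.differentiableWithinAt
  unfold GG
  fun_prop

lemma C_real {a : ℝ} (ha : 0 < a) : Summable (fun v : ℤ × ℤ => 16*π*a/(a^2+4*π^2*nsq v)^3) := by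
  have := (C_sum (a := a) (by simpa using ha)).norm.mul_left (16*π*a)
  refine this.congr fun v => ?_
  have hv := nsq_nonneg v
  rw [show (1/((a:ℂ)^2+4*π^2*(nsq v:ℂ))^3) = ((1/(a^2+4*π^2*nsq v)^3 : ℝ) : ℂ) by push_cast; rfl, Complex.norm_real, Real.norm_of_nonneg (by positivity)]
  ring

lemma C_lint {a : ℝ} (ha : 0 < a) : ∫⁻ t in Ioi (0:ℝ), ENNReal.ofReal (t * NN t * exp (-a*t)) = 
    ENNReal.ofReal (∑' v : ℤ × ℤ, 16*π*a/(a^2+4*π^2*nsq v)^3) := by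
  have hv := nsq_nonneg
  rw [ENNReal.ofReal_tsum_of_nonneg (fun v => by have := hv v; positivity) (C_real ha), ← B_main ha, ← lintegral_tsum (fun _ => by fun_prop)]
  apply setLIntegral_congr_fun measurableSet_Ioi
  intro t ht
  simp only [mem_Ioi] at ht
  have := NN_nonneg t
  simp only
  rw [show t * NN t * exp (-a*t) = (t * exp (-a*t)) * NN t by ring, ENNReal.ofReal_mul (by positivity), NN_ofReal, ← ENNReal.tsum_mul_left]
  congr 1; ext v
  rw [← ENNReal.ofReal_mul (by positivity)]
  congr 1; ring

lemma C_NN {a : ℂ} (ha : 0 < a.re) :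
    ∫ t in Ioi (0:ℝ), ((t * NN t : ℝ) : ℂ) * Complex.exp (-a*t) = GG a := by
  have hm := NN_meas
  have hv := nsq_nonneg
  refine C_cont (f := fun t => t * NN t) (g := fun a => ∑' v : ℤ × ℤ, 16*π*a/(a^2+4*π^2*nsq v)^3) (by fun_prop) 
    (fun t ht => mul_nonneg ht.le (NN_nonneg t)) GG_diff (fun a ha => tsum_nonneg fun v => by have := hv v; positivity) ?_ (fun a ha => C_lint ha) ha
  intro a ha
  unfold GG
  rw [← tsum_mul_left, Complex.ofReal_tsum]
  congr 1; ext v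
  push_cast
  ring

lemma C_NN_int {ε : ℝ} (hε : 0 < ε) : IntegrableOn (fun t => t * NN t * exp (-ε*t)) (Ioi 0) := by
  have hm := NN_meas
  exact C_int (f := fun t => t * NN t) (by fun_prop) (fun t ht => mul_nonneg ht.le (NN_nonneg t)) (C_lint hε)

lemma C_pow_int {ε : ℝ} (hε : 0 < ε) (k : ℕ) : IntegrableOn (fun t : ℝ => t^k * exp (-ε*t)) (Ioi 0) := by
  have := integrableOn_rpow_mul_exp_neg_mul_rpow (s := k) (p := 1) (by have : (0:ℝ) ≤ k := Nat.cast_nonneg k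
                                                                       linarith) one_pos hε
  simpa using this

end

section
open Real MeasureTheory Set

noncomputable def PP (t : ℝ) : ℝ := NN t - (2*π/3)*t^3

noncomputable def bb (l : ℝ) : ℝ := -(1/(2*π)) * ∑' v : ℤ × ℤ, if nsq v = l^2 then 1/nsq v else 0

noncomputable def aa (l ε : ℝ) : ℂ := (ε:ℂ) + ((2*π*l:ℝ):ℂ) * Complex.I

lemma aa_re (l ε : ℝ) : (aa l ε).re = ε := by simp [aa]

lemma nsq_zero_iff (v : ℤ × ℤ) : nsq v = 0 ↔ v = 0 := by
  unfold nsq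
  constructor
  · intro h
    have h1 : (v.1:ℝ) = 0 := by nlinarith [sq_nonneg (v.1:ℝ), sq_nonneg (v.2:ℝ)]
    have h2 : (v.2:ℝ) = 0 := by nlinarith [sq_nonneg (v.1:ℝ), sq_nonneg (v.2:ℝ)]
    ext
    · exact_mod_cast h1
    · exact_mod_cast h2
  · rintro rfl; simp

lemma nsq_one_le {v : ℤ × ℤ} (h : v ≠ 0) : 1 ≤ nsq v := by
  have h0 : nsq v ≠ 0 := fun hh => h ((nsq_zero_iff v).1 hh)
  have h1 := nsq_nonneg v
  have h2 : 0 < nsq v := lt_of_le_of_ne h1 (Ne.symm h0)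
  unfold nsq at *
  have : 0 < v.1^2+v.2^2 := by exact_mod_cast h2
  exact_mod_cast this

/-- the weight -/
noncomputable def QQ (C t : ℝ) : ℝ := t * (C * t - PP t)

lemma QQ_eq (C t : ℝ) : QQ C t = C * t^2 + (2*π/3)*t^4 - t * NN t := by
  unfold QQ PP; ring

lemma QQ_int (C : ℝ) {ε : ℝ} (hε : 0 < ε) : IntegrableOn (fun t => QQ C t * exp (-ε*t)) (Ioi 0) := by
  have h := (((C_pow_int hε 2).const_mul C).add ((C_pow_int hε 4).const_mul (2*π/3))).sub (C_NN_int hε)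
  refine IntegrableOn.congr_fun h (fun t _ => ?_) measurableSet_Ioi
  simp only [QQ_eq, Pi.sub_apply, Pi.add_apply]
  ring

lemma CC_int {f : ℝ → ℝ} (hf : Measurable f) {a : ℂ} (h : IntegrableOn (fun t => f t * exp (-a.re*t)) (Ioi 0)) :
    IntegrableOn (fun t => (f t : ℂ) * Complex.exp (-a*t)) (Ioi 0) := by
  refine Integrable.mono h ?_ ?_
  · apply Measurable.aestronglyMeasurable
    fun_prop
  · refine Filter.Eventually.of_forall fun t => ?_
    rw [norm_mul, norm_mul, Complex.norm_real, Complex.norm_exp]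
    simp

lemma QQ_meas (C : ℝ) : Measurable (QQ C) := by
  have hm := NN_meas
  have : QQ C = fun t => C * t^2 + (2*π/3)*t^4 - t * NN t := funext (QQ_eq C)
  rw [this]; fun_prop

lemma QQ_intC (C l : ℝ) {ε : ℝ} (hε : 0 < ε) : IntegrableOn (fun t => (QQ C t : ℂ) * Complex.exp (-(aa l ε)*t)) (Ioi 0) :=
  CC_int (QQ_meas C) (by rw [aa_re]; exact QQ_int C hε)

lemma QQ_valC (C l : ℝ) {ε : ℝ} (hε : 0 < ε) : ∫ t in Ioi (0:ℝ), (QQ C t : ℂ) * Complex.exp (-(aa l ε)*t) = 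
    C * (2/(aa l ε)^3) + (16*π/(aa l ε)^5 - GG (aa l ε)) := by
  have ha : 0 < (aa l ε).re := by rw [aa_re]; exact hε
  have hm := NN_meas
  have i2 : IntegrableOn (fun t : ℝ => ((t^2 : ℝ):ℂ) * Complex.exp (-(aa l ε)*t)) (Ioi 0) := CC_int (f := fun t => t^2) (by fun_prop) (by rw [aa_re]; exact C_pow_int hε 2)
  have i4 : IntegrableOn (fun t : ℝ => ((t^4 : ℝ):ℂ) * Complex.exp (-(aa l ε)*t)) (Ioi 0) := CC_int (f := fun t => t^4) (by fun_prop) (by rw [aa_re]; exact C_pow_int hε 4)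
  have iN : IntegrableOn (fun t : ℝ => ((t * NN t : ℝ):ℂ) * Complex.exp (-(aa l ε)*t)) (Ioi 0) := CC_int (f := fun t => t * NN t) (by fun_prop) (by rw [aa_re]; exact C_NN_int hε)
  have e2 := C_pow 2 ha
  have e4 := C_pow 4 ha
  have eN := C_NN ha
  have : ∀ t : ℝ, (QQ C t : ℂ) * Complex.exp (-(aa l ε)*t) = (C * (((t^2 : ℝ):ℂ) * Complex.exp (-(aa l ε)*t)) + (2*π/3) * (((t^4 : ℝ):ℂ) * Complex.exp (-(aa l ε)*t))) - ((t * NN t : ℝ):ℂ) * Complex.exp (-(aa l ε)*t) := by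
    intro t
    rw [QQ_eq]; push_cast; ring
  simp_rw [this]
  rw [integral_sub, integral_add, integral_const_mul, integral_const_mul, e2, e4, eN]
  · simp [Nat.factorial]; ring
  · exact i2.const_mul _
  · exact i4.const_mul _
  · exact (i2.const_mul _).add (i4.const_mul _)
  · exact iN

lemma GG_split {a : ℂ} (ha : 0 < a.re) : GG a - 16*π/a^5 = 16*π*a * ∑' v : ℤ × ℤ, (if v = 0 then 0 else 1/(a^2+4*π^2*(nsq v:ℂ))^3) := by
  have ha0 : a ≠ 0 := by rintro rfl; simp at ha
  unfold GG
  rw [(C_sum ha).tsum_eq_add_tsum_ite 0]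
  have h0 : nsq 0 = 0 := (nsq_zero_iff 0).2 rfl
  rw [h0]
  simp only [Complex.ofReal_zero, mul_zero, add_zero]
  rw [mul_add]
  have : 16*π*a*(1/(a^2)^3) = 16*π/a^5 := by field_simp
  rw [this]; ring

lemma LL_bound (l : ℝ) {ε : ℝ} (hε : 0 < ε) (hε1 : ε ≤ 1) {v : ℤ × ℤ} (hv : v ≠ 0) :
    ‖(ε / ((aa l ε)^2+4*π^2*(nsq v:ℂ)) : ℂ)^3‖ ≤ (1 + (1+2*π*|l|)^2/1 + 1/1)^3 * (1/(1+nsq v)^3) := by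
  have hn := nsq_nonneg v
  have hn1 := nsq_one_le hv
  set a := aa l ε with ha
  set n := nsq v
  have hre : a.re = ε := aa_re l ε
  have hX1 : ε ≤ ‖a^2+4*π^2*(n:ℂ)‖ := by
    rw [C_fac a hn, norm_mul]
    set P := ‖a + ((2*π*√n:ℝ):ℂ) * Complex.I‖ with hP
    set M := ‖a - ((2*π*√n:ℝ):ℂ) * Complex.I‖ with hM
    have p1 : ε ≤ P := by refine le_trans ?_ (Complex.re_le_norm _); simp [hre]
    have p2 : ε ≤ M := by refine le_trans ?_ (Complex.re_le_norm _); simp [hre]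
    have p3 : 2 ≤ P + M := by
      have h := norm_sub_le (a + ((2*π*√n:ℝ):ℂ) * Complex.I) (a - ((2*π*√n:ℝ):ℂ) * Complex.I)
      have e : (a + ((2*π*√n:ℝ):ℂ) * Complex.I) - (a - ((2*π*√n:ℝ):ℂ) * Complex.I) = ((4*π*√n:ℝ):ℂ) * Complex.I := by
        push_cast; ring
      rw [e, norm_mul, Complex.norm_real, Complex.norm_I, mul_one, Real.norm_of_nonneg (by positivity)] at h
      have : 1 ≤ √n := Real.one_le_sqrt.2 hn1
      nlinarith [Real.pi_gt_three]
    rcases le_total 1 P with h | h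
    · nlinarith
    · have : 1 ≤ M := by linarith
      nlinarith
  have hna : ‖a‖ ≤ 1 + 2*π*|l| := by
    rw [ha, aa]
    refine (norm_add_le _ _).trans ?_
    rw [norm_mul, Complex.norm_real, Complex.norm_real, Complex.norm_I, mul_one, Real.norm_of_nonneg hε.le, Real.norm_eq_abs, abs_mul, abs_of_pos (by positivity : 0 < 2*π)]
    linarith
  have hX2 := C_low1 a hn
  set X := ‖a^2+4*π^2*(n:ℂ)‖
  have : ‖(ε / (a^2+4*π^2*(n:ℂ)) : ℂ)^3‖ = 1/(X/ε)^3 := by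
    rw [norm_pow, norm_div, Complex.norm_real, Real.norm_of_nonneg hε.le, ← one_div_pow, one_div_div]
  rw [this]
  apply C_comb one_pos hn
  · rwa [le_div_iff₀ hε, one_mul]
  · have : X ≤ X/ε := by
      rw [le_div_iff₀ hε]; nlinarith
    have h4 := pow_le_pow_left₀ (norm_nonneg a) hna 2
    linarith
  · positivity

open Filter Topology

lemma aa_tendsto (l : ℝ) : Tendsto (fun ε => aa l ε) (𝓝[>] 0) (𝓝 (((2*π*l:ℝ):ℂ) * Complex.I)) := by
  have : Continuous (fun ε => aa l ε) := by unfold aa; fun_prop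
  have h := this.tendsto 0
  simp only [aa, Complex.ofReal_zero, zero_add] at h
  exact h.mono_left nhdsWithin_le_nhds

noncomputable def LL (l : ℝ) (v : ℤ × ℤ) : ℂ := if v = 0 then 0 else if nsq v = l^2 then (1/(((4*π*l:ℝ):ℂ) * Complex.I))^3 else 0

lemma LL_term (l : ℝ) (v : ℤ × ℤ) : Tendsto (fun ε : ℝ => (if v = 0 then 0 else (ε / ((aa l ε)^2+4*π^2*(nsq v:ℂ)) : ℂ)^3)) (𝓝[>] 0) (𝓝 (LL l v)) := by
  unfold LL
  split_ifs with h0 h1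
  · exact tendsto_const_nhds
  · have hl : l ≠ 0 := by
      rintro rfl
      have := nsq_one_le h0
      rw [h1] at this
      norm_num at this
    have hc : Tendsto (fun ε : ℝ => (1/((ε:ℂ) + ((4*π*l:ℝ):ℂ) * Complex.I))^3) (𝓝[>] 0) (𝓝 ((1/(((4*π*l:ℝ):ℂ) * Complex.I))^3)) := by
      have hne : (((4*π*l:ℝ):ℂ) * Complex.I) ≠ 0 := by
        simp [hl, Real.pi_ne_zero]
      have : Tendsto (fun ε : ℝ => ((ε:ℂ) + ((4*π*l:ℝ):ℂ) * Complex.I)) (𝓝[>] 0) (𝓝 (((4*π*l:ℝ):ℂ) * Complex.I)) := by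
        have hcc : Continuous (fun ε : ℝ => ((ε:ℂ) + ((4*π*l:ℝ):ℂ) * Complex.I)) := by fun_prop
        have h := hcc.tendsto 0
        simp only [Complex.ofReal_zero, zero_add] at h
        exact h.mono_left nhdsWithin_le_nhds
      exact (tendsto_const_nhds.div this hne).pow 3
    refine hc.congr' ?_
    filter_upwards [self_mem_nhdsWithin] with ε hε
    have hε0 : (ε:ℂ) ≠ 0 := by exact_mod_cast (ne_of_gt hε)
    congr 1
    have : (aa l ε)^2+4*π^2*(nsq v:ℂ) = ε * ((ε:ℂ) + ((4*π*l:ℝ):ℂ) * Complex.I) := by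
      rw [h1, aa]; push_cast; ring_nf; rw [Complex.I_sq]; ring
    rw [this, div_mul_eq_div_div, div_self hε0]
  · have : Tendsto (fun ε : ℝ => ((aa l ε)^2+4*π^2*(nsq v:ℂ))) (𝓝[>] 0) (𝓝 ((((2*π*l:ℝ):ℂ) * Complex.I)^2 +4*π^2*(nsq v:ℂ))) := ((aa_tendsto l).pow 2).add_const _
    have hne : (((2*π*l:ℝ):ℂ) * Complex.I)^2 +4*π^2*(nsq v:ℂ) ≠ 0 := by
      have : (((2*π*l:ℝ):ℂ) * Complex.I)^2 +4*π^2*(nsq v:ℂ) = ((4*π^2*(nsq v - l^2) : ℝ) : ℂ) := by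
        rw [mul_pow, Complex.I_sq]; push_cast; ring
      rw [this]
      have h2 : nsq v - l^2 ≠ 0 := sub_ne_zero.2 h1
      have := Real.pi_ne_zero
      exact_mod_cast (by positivity : 4*π^2*(nsq v - l^2) ≠ 0)
    have he : Tendsto (fun ε : ℝ => (ε:ℂ)) (𝓝[>] 0) (𝓝 0) := by
      have := Complex.continuous_ofReal.tendsto 0
      exact this.mono_left nhdsWithin_le_nhds
    have := (he.div this hne).pow 3
    simpa using this

lemma GG_lim (l : ℝ) : Tendsto (fun ε : ℝ => (ε:ℂ)^3 * (GG (aa l ε) - 16*π/(aa l ε)^5)) (𝓝[>] 0) (𝓝 (bb l : ℂ)) := by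
  have hd : Tendsto (fun ε : ℝ => ∑' v : ℤ × ℤ, (if v = 0 then 0 else (ε / ((aa l ε)^2+4*π^2*(nsq v:ℂ)) : ℂ)^3)) (𝓝[>] 0) (𝓝 (∑' v, LL l v)) := by
    refine tendsto_tsum_of_dominated_convergence (sum_lat.mul_left ((1 + (1+2*π*|l|)^2/1 + 1/1)^3)) (LL_term l) ?_
    filter_upwards [Ioc_mem_nhdsGT one_pos] with ε hε v
    split_ifs with h0
    · rw [norm_zero]; have := nsq_nonneg v; positivity
    · exact LL_bound l hε.1 hε.2 h0
  have hm := ((aa_tendsto l).const_mul (16*π:ℂ)).mul hd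
  have e : (16*π:ℂ) * (((2*π*l:ℝ):ℂ) * Complex.I) * ∑' v, LL l v = bb l := by
    unfold bb
    rw [Complex.ofReal_mul (-(1/(2*π))), Complex.ofReal_tsum, ← tsum_mul_left, ← tsum_mul_left]
    congr 1; ext v
    unfold LL
    split_ifs with h0 h1 h1
    · rw [(nsq_zero_iff v).2 h0]; simp
    · simp
    · have hl : l ≠ 0 := by
        rintro rfl
        have := nsq_one_le h0
        rw [h1] at this
        norm_num at this
      have hl' : (l:ℂ) ≠ 0 := by exact_mod_cast hl
      have hp : (π:ℂ) ≠ 0 := by exact_mod_cast Real.pi_ne_zero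
      have hI := Complex.I_ne_zero
      rw [h1]
      push_cast
      field_simp
      rw [Complex.I_sq]; ring
    · simp
  rw [e] at hm
  refine hm.congr' ?_
  filter_upwards [self_mem_nhdsWithin] with ε hε
  rw [GG_split (by rw [aa_re]; exact hε)]
  rw [mul_left_comm, ← mul_assoc]
  rw [← tsum_mul_left, ← tsum_mul_left]
  congr 1; ext v
  split_ifs
  · simp
  · rw [div_pow]; ring

lemma pow_lim (l : ℝ) : Tendsto (fun ε : ℝ => (ε:ℂ)^3 * (2/(aa l ε)^3)) (𝓝[>] 0) (𝓝 ((if l = 0 then 2 else 0 : ℝ) : ℂ)) := by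
  split_ifs with h
  · subst h
    refine tendsto_const_nhds.congr' ?_
    filter_upwards [self_mem_nhdsWithin] with ε hε
    have hε0 : (ε:ℂ) ≠ 0 := by exact_mod_cast (ne_of_gt hε)
    simp [aa]; field_simp
  · have he : Tendsto (fun ε : ℝ => (ε:ℂ)) (𝓝[>] 0) (𝓝 0) := by
      have := Complex.continuous_ofReal.tendsto 0
      exact this.mono_left nhdsWithin_le_nhds
    have hne : (((2*π*l:ℝ):ℂ) * Complex.I)^3 ≠ 0 := by
      simp [h, Real.pi_ne_zero]
    have := (he.pow 3).mul ((tendsto_const_nhds (x := (2:ℂ))).div ((aa_tendsto l).pow 3) hne)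
    simpa using this

lemma QQ_val (C l : ℝ) {ε : ℝ} (hε : 0 < ε) : ∫ t in Ioi (0:ℝ), QQ C t * exp (-ε*t) * cos (2*π*l*t) = 
    (C * (2/(aa l ε)^3) + (16*π/(aa l ε)^5 - GG (aa l ε)) : ℂ).re := by
  rw [← QQ_valC C l hε]
  have h := integral_re (QQ_intC C l hε)
  refine Eq.trans ?_ h
  congr 1; ext t
  have : Complex.exp (-(aa l ε)*t) = ((exp (-ε*t):ℝ):ℂ) * (Complex.exp (((-(2*π*l*t):ℝ):ℂ) * Complex.I)) := by
    unfold aa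
    rw [Complex.ofReal_exp, ← Complex.exp_add]
    congr 1; push_cast; ring
  rw [this, ← mul_assoc, ← Complex.ofReal_mul]
  simp only [RCLike.re_to_complex, Complex.re_ofReal_mul]
  rw [Complex.exp_ofReal_mul_I_re, Real.cos_neg]

lemma QQ_lim (C l : ℝ) : Tendsto (fun ε : ℝ => ε^3 * ∫ t in Ioi (0:ℝ), QQ C t * exp (-ε*t) * cos (2*π*l*t)) (𝓝[>] 0) 
    (𝓝 (C * (if l = 0 then 2 else 0) - bb l)) := by
  have h := ((pow_lim l).const_mul (C:ℂ)).sub (GG_lim l)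
  have h2 := (Complex.continuous_re.tendsto _).comp h
  have e : ((C:ℂ) * ((if l = 0 then 2 else 0 : ℝ) : ℂ) - (bb l : ℂ)).re = C * (if l = 0 then 2 else 0) - bb l := by
    rw [← Complex.ofReal_mul, ← Complex.ofReal_sub, Complex.ofReal_re]
  rw [e] at h2
  refine h2.congr' ?_
  filter_upwards [self_mem_nhdsWithin] with ε hε
  rw [QQ_val C l hε, ← Complex.re_ofReal_mul]
  simp only [Function.comp]
  congr 1
  push_cast
  ring

lemma QQ_cos_int (C l : ℝ) {ε : ℝ} (hε : 0 < ε) : IntegrableOn (fun t => QQ C t * exp (-ε*t) * cos (2*π*l*t)) (Ioi 0) := by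
  refine (QQ_int C hε).mul_bdd (c := 1) (by fun_prop) (Filter.Eventually.of_forall fun t => ?_)
  rw [Real.norm_eq_abs]; exact Real.abs_cos_le_one _

/-- the key inequality for nonnegative trigonometric polynomials -/
lemma trig_ineq {ι : Type*} (s : Finset ι) (c l : ι → ℝ) (hK : ∀ t : ℝ, 0 ≤ ∑ j ∈ s, c j * cos (2*π*l j*t))
    (C t₀ : ℝ) (hP : ∀ t, t₀ < t → PP t ≤ C * t) :
    ∑ j ∈ s, c j * bb (l j) ≤ 2 * C * ∑ j ∈ s, if l j = 0 then c j else 0 := by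
  set K : ℝ → ℝ := fun t => ∑ j ∈ s, c j * cos (2*π*l j*t) with hKd
  have hIntg : ∀ ε > 0, IntegrableOn (fun t => QQ C t * exp (-ε*t) * K t) (Ioi 0) := by
    intro ε hε
    have := integrable_finsetSum s (fun j _ => (QQ_cos_int C (l j) hε).const_mul (c j))
    refine this.congr (Filter.Eventually.of_forall fun t => ?_)
    simp only [hKd, Finset.mul_sum]
    exact Finset.sum_congr rfl fun j _ => by ring
  have hval : ∀ ε > 0, ∫ t in Ioi (0:ℝ), QQ C t * exp (-ε*t) * K t = ∑ j ∈ s, c j * ∫ t in Ioi (0:ℝ), QQ C t * exp (-ε*t) * cos (2*π*l j*t) := by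
    intro ε hε
    simp_rw [← integral_const_mul]
    rw [← integral_finsetSum s (fun j _ => (QQ_cos_int C (l j) hε).const_mul (c j))]
    congr 1; ext t
    simp only [hKd, Finset.mul_sum]
    exact Finset.sum_congr rfl fun j _ => by ring
  have hlim : Tendsto (fun ε : ℝ => ε^3 * ∫ t in Ioi (0:ℝ), QQ C t * exp (-ε*t) * K t) (𝓝[>] 0) (𝓝 (∑ j ∈ s, c j * (C * (if l j = 0 then 2 else 0) - bb (l j)))) := by
    have := tendsto_finsetSum s (fun j _ => (QQ_lim C (l j)).const_mul (c j))
    refine this.congr' ?_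
    filter_upwards [self_mem_nhdsWithin] with ε hε
    rw [hval ε hε, Finset.mul_sum]
    exact Finset.sum_congr rfl fun j _ => by ring
  set B := ∫ t in Ioi (0:ℝ), exp (|t₀|) * ‖QQ C t * exp (-1*t) * K t‖ with hB
  have hBi : IntegrableOn (fun t => exp (|t₀|) * ‖QQ C t * exp (-1*t) * K t‖) (Ioi 0) := (hIntg 1 one_pos).norm.const_mul _
  have hlow : ∀ ε > 0, -B ≤ ∫ t in Ioi (0:ℝ), QQ C t * exp (-ε*t) * K t := by
    intro ε hε
    rw [hB, ← integral_neg]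
    refine setIntegral_mono_on hBi.neg (hIntg ε hε) measurableSet_Ioi ?_
    intro t ht
    simp only [mem_Ioi] at ht
    by_cases h : t₀ < t
    · have h1 : 0 ≤ QQ C t := mul_nonneg ht.le (by have := hP t h; linarith)
      have h2 : 0 ≤ QQ C t * exp (-ε*t) * K t := mul_nonneg (mul_nonneg h1 (exp_pos _).le) (hK t)
      have h3 : 0 ≤ exp (|t₀|) * ‖QQ C t * exp (-1*t) * K t‖ := by positivity
      linarith
    · push Not at h
      have h4 : exp (-ε*t) ≤ 1 := Real.exp_le_one_iff.2 (by nlinarith)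
      have h5 : 1 ≤ exp (|t₀|) * exp (-1*t) := by
        rw [← Real.exp_add]; apply Real.one_le_exp; have := le_abs_self t₀; linarith
      have h6 : exp (|t₀|) * ‖QQ C t * exp (-1*t) * K t‖ = exp (|t₀|) * exp (-1*t) * |QQ C t * K t| := by
        rw [Real.norm_eq_abs, show QQ C t * exp (-1*t) * K t = exp (-1*t) * (QQ C t * K t) by ring, abs_mul, abs_of_pos (exp_pos _)]; ring
      have h7 : |QQ C t * exp (-ε*t) * K t| = exp (-ε*t) * |QQ C t * K t| := by
        rw [show QQ C t * exp (-ε*t) * K t = exp (-ε*t) * (QQ C t * K t) by ring, abs_mul, abs_of_pos (exp_pos _)]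
      rw [h6]
      have h8 := neg_abs_le (QQ C t * exp (-ε*t) * K t)
      rw [h7] at h8
      have h9 := abs_nonneg (QQ C t * K t)
      nlinarith
  have hz : Tendsto (fun ε : ℝ => ε^3 * (-B)) (𝓝[>] 0) (𝓝 0) := by
    have hc : Continuous (fun ε : ℝ => ε^3 * (-B)) := by fun_prop
    have := hc.tendsto 0
    simp only [ne_eq, OfNat.ofNat_ne_zero, not_false_eq_true, zero_pow, zero_mul] at this
    exact this.mono_left nhdsWithin_le_nhds
  have hfin : 0 ≤ ∑ j ∈ s, c j * (C * (if l j = 0 then 2 else 0) - bb (l j)) := by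
    refine le_of_tendsto_of_tendsto hz hlim ?_
    filter_upwards [self_mem_nhdsWithin] with ε hε
    have : (0:ℝ) < ε := hε
    exact mul_le_mul_of_nonneg_left (hlow ε hε) (by positivity)
  have e : ∑ j ∈ s, c j * (C * (if l j = 0 then 2 else 0) - bb (l j)) = 2 * C * (∑ j ∈ s, if l j = 0 then c j else 0) - ∑ j ∈ s, c j * bb (l j) := by
    rw [Finset.mul_sum, ← Finset.sum_sub_distrib]
    refine Finset.sum_congr rfl fun j _ => ?_
    split_ifs <;> ring
  linarith

end

section
open Real MeasureTheory Set

lemma half_int {m : ℤ} (h : IsIntegral ℤ ((m:ℝ)/2)) : Even m := by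
  have h1 : IsIntegral ℤ ((m:ℚ)/2) := by
    rw [← isIntegral_algebraMap_iff (B := ℝ) (algebraMap ℚ ℝ).injective]
    simpa using h
  obtain ⟨y, hy⟩ := IsIntegrallyClosed.isIntegral_iff.1 h1
  refine ⟨y, ?_⟩
  have : (y:ℚ) = (m:ℚ)/2 := by simpa using hy
  have h2 : (m:ℚ) = y + y := by linarith
  exact_mod_cast h2

lemma int_int (m : ℤ) : IsIntegral ℤ (m:ℝ) := by
  have := isIntegral_algebraMap (R := ℤ) (A := ℝ) (x := m)
  simpa using this

lemma sqrt_int (n : ℕ) : IsIntegral ℤ (√(n:ℝ)) := by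
  apply IsIntegral.of_pow (n := 2) (by norm_num)
  rw [Real.sq_sqrt (by positivity)]
  exact_mod_cast int_int n

lemma sqrt2_int : IsIntegral ℤ (√2) := by simpa using sqrt_int 2

/-- the even part of the lattice of frequencies -/
def RZ : AddSubgroup ℝ where
  carrier := {x | ∃ p q : ℤ, ∃ o : ℝ, IsIntegral ℤ o ∧ Even (p+q) ∧ x = p + q*√2 + 2*o}
  zero_mem' := ⟨0, 0, 0, isIntegral_zero, by simp, by simp⟩
  add_mem' := by
    rintro x y ⟨p, q, o, h, he, rfl⟩ ⟨p', q', o', h', he', rfl⟩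
    refine ⟨p+p', q+q', o+o', h.add h', ?_, by push_cast; ring⟩
    have := he.add he'
    convert! this using 1; ring
  neg_mem' := by
    rintro x ⟨p, q, o, h, he, rfl⟩
    refine ⟨-p, -q, -o, h.neg, ?_, by push_cast; ring⟩
    have := he.neg
    convert! this using 1; ring

lemma RZ_mk (p q : ℤ) {o x : ℝ} (h : IsIntegral ℤ o) (he : Even (p+q)) (hx : x = p + q*√2 + 2*o) : x ∈ RZ :=
  ⟨p, q, o, h, he, hx⟩

lemma one_not_RZ : (1:ℝ) ∉ RZ := by
  rintro ⟨N1, N2, o, ho, he, h⟩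
  obtain ⟨p, hp⟩ : ∃ p : ℤ, p = 1 - N1 := ⟨_, rfl⟩
  obtain ⟨q, hq⟩ : ∃ q : ℤ, q = - N2 := ⟨_, rfl⟩
  have hp' : (p:ℝ) = 1 - N1 := by rw [hp]; push_cast; rfl
  have hq' : (q:ℝ) = - N2 := by rw [hq]; push_cast; rfl
  have h1 : (p:ℝ) + q*√2 = 2*o := by rw [hp', hq']; linarith
  have s2 : √2^2 = 2 := Real.sq_sqrt (by norm_num)
  have hpe : Even (p^2) := by
    apply half_int
    have : ((p^2:ℤ):ℝ)/2 = 2*o^2 - q^2 - (p*q:ℤ)*√2 := by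
      push_cast
      have : 4*o^2 = p^2 + 2*q^2 + 2*(p*q)*√2 := by
        have : 4*o^2 = (p + q*√2)^2 := by rw [h1]; ring
        rw [this]; ring_nf; rw [s2]
      linarith
    rw [this]
    refine ((((int_int 2).mul (ho.pow 2)).sub ?_).sub ((int_int _).mul sqrt2_int))
    exact (int_int q).pow 2
  have hpe' : Even p := by simpa [Int.even_pow] using hpe
  obtain ⟨r, hr⟩ := hpe'
  have hr' : (p:ℝ) = r + r := by rw [hr]; push_cast; rfl
  have hqe : Even (q^2) := by
    apply half_int
    have : ((q^2:ℤ):ℝ)/2 = (o - r)^2 := by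
      push_cast
      have h3 : q*√2 = 2*(o-r) := by linarith
      have : (q*√2)^2 = 4*(o-r)^2 := by rw [h3]; ring
      rw [mul_pow, s2] at this
      linarith
    rw [this]
    exact (ho.sub (int_int r)).pow 2
  have hqe' : Even q := by simpa [Int.even_pow] using hqe
  have hpe'' : Even p := ⟨r, hr⟩
  rw [hp] at hpe''
  rw [hq] at hqe'
  grind

lemma RZ_odd1 (j : ℕ) : ∃ o : ℝ, IsIntegral ℤ o ∧ √((4*j+1:ℕ):ℝ) = 1 + 2*o := by
  refine ⟨(√((4*j+1:ℕ):ℝ) - 1)/2, ?_, by ring⟩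
  set x := √((4*j+1:ℕ):ℝ)
  have hx : x^2 = 4*j+1 := by rw [Real.sq_sqrt (by positivity)]; push_cast; rfl
  refine ⟨Polynomial.X^2 + Polynomial.X - Polynomial.C (j:ℤ), ?_, ?_⟩
  · monicity!
  · simp
    nlinarith

/-- odd-type frequencies -/
lemma RZ_odd {n : ℕ} (h : n % 4 = 1 ∨ n % 8 = 2) : √(n:ℝ) - 1 ∈ RZ := by
  rcases h with h | h
  · obtain ⟨o, ho, hs⟩ := RZ_odd1 (n/4)
    rw [show 4*(n/4)+1 = n by omega] at hs
    exact RZ_mk 0 0 ho (by simp) (by rw [hs]; simp)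
  · obtain ⟨o, ho, hs⟩ := RZ_odd1 (n/8)
    have : (n:ℝ) = 2 * ((4*(n/8)+1:ℕ):ℝ) := by
      have : n = 2*(4*(n/8)+1) := by omega
      exact_mod_cast this
    rw [this, Real.sqrt_mul (by norm_num), hs]
    exact RZ_mk (-1) 1 (sqrt2_int.mul ho) (by simp) (by push_cast; ring)

lemma RZ_even {n : ℕ} (h : n % 4 = 0) : √(n:ℝ) ∈ RZ := by
  have : (n:ℝ) = 2^2 * ((n/4:ℕ):ℝ) := by
    have : n = 2^2*(n/4) := by omega
    exact_mod_cast this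
  rw [this, Real.sqrt_mul (by norm_num), Real.sqrt_sq (by norm_num)]
  exact RZ_mk 0 0 (sqrt_int (n/4)) (by simp) (by simp)

lemma two_RZ : (2:ℝ) ∈ RZ := RZ_mk 0 0 (int_int 1) (by simp) (by simp)

open Classical in
noncomputable def sg (x : ℝ) : ℝ := if x ∈ RZ then 1 else -1

def RR (x : ℝ) : Prop := x ∈ RZ ∨ x - 1 ∈ RZ

lemma RR_add {x s : ℝ} (hx : RR x) (hs : s - 1 ∈ RZ) : RR (x + s) := by
  rcases hx with h | h
  · right; have := RZ.add_mem h hs; convert! this using 1; ring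
  · left; have := RZ.add_mem (RZ.add_mem h hs) two_RZ; convert! this using 1; ring

lemma sg_sq (x : ℝ) : sg x * sg x = 1 := by unfold sg; split_ifs <;> norm_num

lemma sg_odd {x s : ℝ} (hx : RR x) (hs : s - 1 ∈ RZ) : sg (x + s) * sg x = -1 := by
  unfold sg
  rcases hx with h | h
  · have h2 : x + s ∉ RZ := by
      intro h3
      apply one_not_RZ
      have := RZ.sub_mem (RZ.sub_mem h3 h) hs
      convert! this using 1; ring
    simp [h, h2]
  · have h1 : x ∉ RZ := by
      intro h3
      apply one_not_RZ
      have := RZ.sub_mem h3 h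
      convert! this using 1; ring
    have h2 : x + s ∈ RZ := by
      have := RZ.add_mem (RZ.add_mem h hs) two_RZ
      convert! this using 1; ring
    simp [h1, h2]

lemma sg_even {x s : ℝ} (hs : s ∈ RZ) : sg (x + s) * sg x = 1 := by
  have : sg (x+s) = sg x := by
    unfold sg
    rw [RZ.add_mem_cancel_right hs]
  rw [this, sg_sq]

/-- integer-valued norm form -/
def nq (v : ℤ × ℤ) : ℕ := (v.1^2 + v.2^2).toNat

lemma nq_int (v : ℤ × ℤ) : (nq v : ℤ) = v.1^2 + v.2^2 := Int.toNat_of_nonneg (by positivity)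

lemma nq_cast (v : ℤ × ℤ) : (nq v : ℝ) = nsq v := by
  have := nq_int v
  unfold nsq
  exact_mod_cast this

lemma nq_mod (v : ℤ × ℤ) (h : nq v % 4 ≠ 0) : nq v % 4 = 1 ∨ nq v % 8 = 2 := by
  have e := nq_int v
  obtain ⟨a, b⟩ := v
  simp only at e
  rcases Int.even_or_odd' a with ⟨k, rfl | rfl⟩ <;> rcases Int.even_or_odd' b with ⟨m, rfl | rfl⟩
  · exfalso
    apply h
    have : (nq (2*k, 2*m) : ℤ) = 4*(k^2+m^2) := by rw [e]; ring
    omega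
  · left
    have : (nq (2*k, 2*m+1) : ℤ) = 4*(k^2+m^2+m)+1 := by rw [e]; ring
    omega
  · left
    have : (nq (2*k+1, 2*m) : ℤ) = 4*(k^2+m^2+k)+1 := by rw [e]; ring
    omega
  · right
    obtain ⟨r, hr⟩ := Int.even_mul_succ_self k
    obtain ⟨s, hs⟩ := Int.even_mul_succ_self m
    have : (nq (2*k+1, 2*m+1) : ℤ) = 4*(k*(k+1)+m*(m+1))+2 := by rw [e]; ring
    omega

lemma nq_even (v : ℤ × ℤ) (h : nq v % 4 = 0) : ∃ u : ℤ × ℤ, v = (2*u.1, 2*u.2) := by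
  have e := nq_int v
  obtain ⟨a, b⟩ := v
  simp only at e
  rcases Int.even_or_odd' a with ⟨k, rfl | rfl⟩ <;> rcases Int.even_or_odd' b with ⟨m, rfl | rfl⟩
  · exact ⟨(k, m), rfl⟩
  · have : (nq (2*k, 2*m+1) : ℤ) = 4*(k^2+m^2+m)+1 := by rw [e]; ring
    omega
  · have : (nq (2*k+1, 2*m) : ℤ) = 4*(k^2+m^2+k)+1 := by rw [e]; ring
    omega
  · have : (nq (2*k+1, 2*m+1) : ℤ) = 4*(k*(k+1)+m*(m+1))+2 := by rw [e]; ring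
    omega

/-- positive definiteness -/
lemma pos_def (L : Finset ℝ) (g : ℝ → ℝ) {η : ℝ} (hη : 0 < η) (t : ℝ) :
    0 ≤ ∑ p ∈ L ×ˢ L, g p.1 * g p.2 * exp (-η*(p.1-p.2)^2) * cos (2*π*(p.1-p.2)*t) := by
  have hs : HasSum (fun k : ℕ => ∑ p ∈ L ×ˢ L, (g p.1 * g p.2 * exp (-η*p.1^2) * exp (-η*p.2^2) * cos (2*π*(p.1-p.2)*t)) * ((2*η*p.1*p.2)^k / k.factorial))
      (∑ p ∈ L ×ˢ L, (g p.1 * g p.2 * exp (-η*p.1^2) * exp (-η*p.2^2) * cos (2*π*(p.1-p.2)*t)) * exp (2*η*p.1*p.2)) := by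
    apply hasSum_sum
    intro p _
    apply HasSum.mul_left
    have := NormedSpace.expSeries_div_hasSum_exp (2*η*p.1*p.2)
    rwa [← Real.exp_eq_exp_ℝ] at this
  have e : ∑ p ∈ L ×ˢ L, g p.1 * g p.2 * exp (-η*(p.1-p.2)^2) * cos (2*π*(p.1-p.2)*t) = 
      (∑ p ∈ L ×ˢ L, (g p.1 * g p.2 * exp (-η*p.1^2) * exp (-η*p.2^2) * cos (2*π*(p.1-p.2)*t)) * exp (2*η*p.1*p.2)) := by
    apply Finset.sum_congr rfl
    intro p _
    have : exp (-η*(p.1-p.2)^2) = exp (-η*p.1^2) * exp (-η*p.2^2) * exp (2*η*p.1*p.2) := by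
      rw [← Real.exp_add, ← Real.exp_add]; congr 1; ring
    rw [this]; ring
  rw [e]
  refine hs.nonneg fun k => ?_
  have : ∑ p ∈ L ×ˢ L, (g p.1 * g p.2 * exp (-η*p.1^2) * exp (-η*p.2^2) * cos (2*π*(p.1-p.2)*t)) * ((2*η*p.1*p.2)^k / k.factorial) 
     = (2*η)^k / k.factorial * ((∑ x ∈ L, g x * exp (-η*x^2) * cos (2*π*x*t) * x^k)^2 + (∑ x ∈ L, g x * exp (-η*x^2) * sin (2*π*x*t) * x^k)^2) := by
    rw [sq, sq, Finset.sum_mul_sum, Finset.sum_mul_sum, ← Finset.sum_product', ← Finset.sum_product', ← Finset.sum_add_distrib, Finset.mul_sum]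
    apply Finset.sum_congr rfl
    intro p _
    rw [show 2*π*(p.1-p.2)*t = 2*π*p.1*t - 2*π*p.2*t by ring, Real.cos_sub, mul_pow, mul_pow]
    ring
  rw [this]
  positivity

/-- subset sums -/
noncomputable def SS (A : Finset ℝ) : Finset ℝ := A.powerset.image (fun T => ∑ x ∈ T, x)

lemma SS_RR (A : Finset ℝ) (hA : ∀ s ∈ A, s - 1 ∈ RZ) : ∀ x ∈ SS A, RR x := by
  intro x hx
  simp only [SS, Finset.mem_image, Finset.mem_powerset] at hx
  obtain ⟨T, hT, rfl⟩ := hx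
  induction T using Finset.induction_on with
  | empty => left; simpa using RZ.zero_mem
  | insert a T ha ih =>
    rw [Finset.sum_insert ha, add_comm]
    exact RR_add (ih (fun y hy => hT (Finset.mem_insert_of_mem hy))) (hA a (hT (Finset.mem_insert_self _ _)))

lemma SS_pos (A : Finset ℝ) : 0 < (SS A).card := by
  apply Finset.card_pos.2
  exact ⟨0, by simp only [SS, Finset.mem_image, Finset.mem_powerset]; exact ⟨∅, by simp, by simp⟩⟩

lemma SS_count_le (L : Finset ℝ) (d : ℝ) : ((L ×ˢ L).filter (fun p => p.1 - p.2 = d)).card ≤ L.card := by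
  apply Finset.card_le_card_of_injOn (fun p => p.2)
  · intro p hp
    simp only [Finset.coe_filter, Finset.mem_product, mem_ofPred_eq] at hp
    exact hp.1.2
  · intro p hp q hq h
    simp only [Finset.coe_filter, Finset.mem_product, mem_ofPred_eq] at hp hq
    simp only at h
    ext
    · linarith [hp.2, hq.2]
    · exact h

lemma SS_count_ge (A : Finset ℝ) {s : ℝ} (hs : s ∈ A) : (SS A).card ≤ 2 * (((SS A) ×ˢ (SS A)).filter (fun p => p.1 - p.2 = s)).card := by
  set B := SS (A.erase s) with hB
  have hsub1 : B ⊆ SS A := by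
    intro x hx
    simp only [hB, SS, Finset.mem_image, Finset.mem_powerset] at hx ⊢
    obtain ⟨T, hT, rfl⟩ := hx
    exact ⟨T, hT.trans (Finset.erase_subset _ _), rfl⟩
  have hsub2 : ∀ x ∈ B, x + s ∈ SS A := by
    intro x hx
    simp only [hB, SS, Finset.mem_image, Finset.mem_powerset] at hx ⊢
    obtain ⟨T, hT, rfl⟩ := hx
    have hsT : s ∉ T := fun h => by simpa using hT h
    refine ⟨insert s T, ?_, ?_⟩
    · intro y hy
      rcases Finset.mem_insert.1 hy with rfl | hy
      · exact hs
      · exact Finset.mem_of_mem_erase (hT hy)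
    · rw [Finset.sum_insert hsT, add_comm]
  have hcov : SS A ⊆ B ∪ B.image (fun x => x + s) := by
    intro x hx
    simp only [SS, Finset.mem_image, Finset.mem_powerset] at hx
    obtain ⟨T, hT, rfl⟩ := hx
    simp only [hB, SS, Finset.mem_union, Finset.mem_image, Finset.mem_powerset]
    by_cases h : s ∈ T
    · right
      refine ⟨∑ x ∈ T.erase s, x, ⟨T.erase s, Finset.erase_subset_erase _ hT, rfl⟩, ?_⟩
      exact Finset.sum_erase_add T _ h
    · left
      refine ⟨T, ?_, rfl⟩
      intro y hy
      exact Finset.mem_erase.2 ⟨fun h' => h (h' ▸ hy), hT hy⟩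
  have h1 : (SS A).card ≤ 2 * B.card := by
    refine (Finset.card_le_card hcov).trans ((Finset.card_union_le _ _).trans ?_)
    have := Finset.card_image_le (s := B) (f := fun x => x + s)
    omega
  have h2 : B.card ≤ (((SS A) ×ˢ (SS A)).filter (fun p => p.1 - p.2 = s)).card := by
    apply Finset.card_le_card_of_injOn (fun x => (x + s, x))
    · intro x hx
      simp only [Finset.coe_filter, Finset.mem_product, mem_ofPred_eq]
      exact ⟨⟨hsub2 x hx, hsub1 hx⟩, by ring⟩
    · intro x _ y _ h
      exact (Prod.mk.inj h).2
  omega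

end

section
open Real MeasureTheory Set

noncomputable def ww (η : ℝ) (v : ℤ × ℤ) : ℝ := exp (-η * nsq v) / nsq v

lemma ww_nonneg (η : ℝ) (v : ℤ × ℤ) : 0 ≤ ww η v := div_nonneg (exp_pos _).le (nsq_nonneg v)

lemma ww_summable {η : ℝ} (hη : 0 < η) : Summable (ww η) := by
  refine Summable.of_nonneg_of_le (ww_nonneg η) (fun v => ?_) (sum_lat.mul_left (48/η^3))
  have hn := nsq_nonneg v
  unfold ww
  by_cases h : v = 0
  · rw [(nsq_zero_iff v).2 h]; simp; positivity
  · have h1 := nsq_one_le h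
    set n := nsq v
    have h2 : exp (-η*n)/n ≤ exp (-η*n) := div_le_self (exp_pos _).le h1
    refine h2.trans ?_
    have h3 : (η*n)^3/6 ≤ exp (η*n) := by
      have := Real.pow_div_factorial_le_exp (η*n) (by positivity) 3
      simpa [Nat.factorial] using this
    rw [neg_mul, Real.exp_neg, div_mul_div_comm, mul_one, inv_eq_one_div, div_le_div_iff₀ (exp_pos _) (by positivity)]
    have h4 : (1+n)^3 ≤ 8*n^3 := by
      have := pow_le_pow_left₀ (by linarith) (show 1+n ≤ 2*n by linarith) 3
      linarith [mul_pow 2 n 3]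
    have h5 := mul_le_mul_of_nonneg_left h4 (by positivity : 0 ≤ η^3)
    have h6 : η^3*n^3 ≤ 6 * exp (η*n) := by rw [← mul_pow]; linarith
    linarith

open Classical in
lemma cnt_split (L : Finset ℝ) {n : ℝ} (hn : 0 < n) : ((L ×ˢ L).filter (fun p => n = (p.1 - p.2)^2)).card = 2 * ((L ×ˢ L).filter (fun p => p.1 - p.2 = √n)).card := by
  have h1 : (L ×ˢ L).filter (fun p => n = (p.1 - p.2)^2) = (L ×ˢ L).filter (fun p => p.1 - p.2 = √n) ∪ (L ×ˢ L).filter (fun p => p.1 - p.2 = -√n) := by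
    rw [← Finset.filter_or]
    apply Finset.filter_congr
    intro p _
    rw [← sq_eq_sq_iff_eq_or_eq_neg, Real.sq_sqrt hn.le, eq_comm]
  have hs : 0 < √n := Real.sqrt_pos.2 hn
  rw [h1, Finset.card_union_of_disjoint]
  · have : ((L ×ˢ L).filter (fun p => p.1 - p.2 = -√n)).card = ((L ×ˢ L).filter (fun p => p.1 - p.2 = √n)).card := by
      apply Finset.card_bij (fun p _ => (p.2, p.1))
      · intro p hp
        simp only [Finset.mem_filter, Finset.mem_product] at hp ⊢
        exact ⟨⟨hp.1.2, hp.1.1⟩, by linarith [hp.2]⟩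
      · intro p _ q _ h
        have := Prod.mk.inj h
        ext
        · exact this.2
        · exact this.1
      · intro p hp
        simp only [Finset.mem_filter, Finset.mem_product] at hp
        refine ⟨(p.2, p.1), ?_, rfl⟩
        simp only [Finset.mem_filter, Finset.mem_product]
        exact ⟨⟨hp.1.2, hp.1.1⟩, by linarith [hp.2]⟩
    omega
  · rw [Finset.disjoint_filter]
    intro p _ h h'
    linarith

open Classical in
lemma A_fin {C t₀ : ℝ} (hP : ∀ t, t₀ < t → PP t ≤ C * t) {η : ℝ} (hη : 0 < η) (V : Finset (ℤ × ℤ)) :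
    ∑ v ∈ V, (if nq v % 4 ≠ 0 then ww η v else 0) - 2 * ∑' v, (if nq v % 4 = 0 then ww η v else 0) ≤ 4*π*C := by
  set A : Finset ℝ := (V.filter (fun v => nq v % 4 ≠ 0)).image (fun v => √(nsq v)) with hA
  have hA1 : ∀ s ∈ A, s - 1 ∈ RZ := by
    intro s hs
    simp only [hA, Finset.mem_image, Finset.mem_filter] at hs
    obtain ⟨v, ⟨_, hv⟩, rfl⟩ := hs
    rw [← nq_cast]
    exact RZ_odd (nq_mod v hv)
  set L := SS A with hL
  have hLpos : (0:ℝ) < L.card := by exact_mod_cast SS_pos A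
  have hRR := SS_RR A hA1
  set c : ℝ × ℝ → ℝ := fun p => sg p.1 * sg p.2 * exp (-η*(p.1-p.2)^2) with hc
  have key := trig_ineq (L ×ˢ L) c (fun p => p.1 - p.2) (pos_def L sg hη) C t₀ hP
  have hR : ∑ p ∈ L ×ˢ L, (if p.1 - p.2 = 0 then c p else 0) = L.card := by
    rw [Finset.sum_product]
    have : ∀ x ∈ L, ∑ y ∈ L, (if x - y = 0 then c (x, y) else 0) = 1 := by
      intro x hx
      rw [Finset.sum_eq_single x]
      · simp [hc, sg_sq]
      · intro y _ hy
        rw [if_neg]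
        intro h; apply hy; linarith
      · intro h; exact absurd hx h
    rw [Finset.sum_congr rfl this]; simp
  rw [hR] at key
  set f : ℝ × ℝ → ℤ × ℤ → ℝ := fun p v => c p * (if nsq v = (p.1-p.2)^2 then 1/nsq v else 0) with hf
  have hfs : ∀ p, Summable (f p) := by
    intro p
    apply summable_of_hasFiniteSupport
    refine (nsq_finite ((p.1-p.2)^2+1)).subset fun v hv => ?_
    simp only [Function.mem_support, hf] at hv
    simp only [mem_ofPred_eq]
    by_contra hcc
    apply hv
    rw [if_neg, mul_zero]
    intro h; linarith
  have hLHS : ∑ p ∈ L ×ˢ L, c p * bb (p.1 - p.2) = -(1/(2*π)) * ∑' v, ∑ p ∈ L ×ˢ L, f p v := by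
    rw [Summable.tsum_finsetSum (fun p _ => hfs p), Finset.mul_sum]
    apply Finset.sum_congr rfl
    intro p _
    simp only [hf, bb, tsum_mul_left]
    ring
  rw [hLHS] at key
  set F : ℤ × ℤ → ℝ := fun v => 2 * (if nq v % 4 = 0 then ww η v else 0) - (if v ∈ V then (if nq v % 4 ≠ 0 then ww η v else 0) else 0) with hF
  have hs1 : Summable (fun v => if nq v % 4 = 0 then ww η v else 0) := by
    refine Summable.of_nonneg_of_le (fun v => ?_) (fun v => ?_) (ww_summable hη)
    · split_ifs
      · exact ww_nonneg _ _
      · rfl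
    · split_ifs
      · rfl
      · exact ww_nonneg _ _
  have hs2 : Summable (fun v => if v ∈ V then (if nq v % 4 ≠ 0 then ww η v else 0) else 0) := by
    apply summable_of_hasFiniteSupport
    refine V.finite_toSet.subset fun v hv => ?_
    simp only [Function.mem_support] at hv
    by_contra h
    exact hv (if_neg h)
  have hFs : Summable F := (hs1.mul_left 2).sub hs2
  have hFv : ∑' v, F v = 2 * ∑' v, (if nq v % 4 = 0 then ww η v else 0) - ∑ v ∈ V, (if nq v % 4 ≠ 0 then ww η v else 0) := by
    rw [hF, Summable.tsum_sub (hs1.mul_left 2) hs2, tsum_mul_left]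
    congr 1
    rw [tsum_eq_sum (s := V)]
    · exact Finset.sum_congr rfl fun v hv => if_pos hv
    · intro v hv; exact if_neg hv
  have hpt : ∀ v, ∑ p ∈ L ×ˢ L, f p v ≤ L.card * F v := by
    intro v
    have hw := ww_nonneg η v
    by_cases h0 : v = 0
    · have hz := (nsq_zero_iff v).2 h0
      have : ww η v = 0 := by simp [ww, hz]
      simp [hf, hF, this, hz]
    have hn := nsq_one_le h0
    have hn0 : 0 < nsq v := by linarith
    have hN := cnt_split L hn0
    set N := ((L ×ˢ L).filter (fun p => nsq v = (p.1 - p.2)^2)).card with hNd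
    have hup : (N:ℝ) ≤ 2 * L.card := by
      rw [hN]; push_cast
      have := SS_count_le L (√(nsq v))
      have : ((((L ×ˢ L).filter (fun p => p.1 - p.2 = √(nsq v))).card : ℕ) : ℝ) ≤ L.card := by exact_mod_cast this
      linarith
    have hcase : ∀ p ∈ L ×ˢ L, nsq v = (p.1-p.2)^2 → p.1 = p.2 + √(nq v) ∨ p.2 = p.1 + √(nq v) := by
      intro p _ h
      have h1 : √(nsq v)^2 = (p.1-p.2)^2 := by rw [Real.sq_sqrt hn0.le, h]
      rw [nq_cast]
      rcases sq_eq_sq_iff_eq_or_eq_neg.1 h1 with h | h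
      · left; linarith
      · right; linarith
    have hgen : ∀ ε : ℝ, (∀ p ∈ L ×ˢ L, nsq v = (p.1-p.2)^2 → sg p.1 * sg p.2 = ε) → ∑ p ∈ L ×ˢ L, f p v = ε * ww η v * N := by
      intro ε hε
      have : ∀ p ∈ L ×ˢ L, f p v = if nsq v = (p.1-p.2)^2 then ε * ww η v else 0 := by
        intro p hp
        simp only [hf]
        split_ifs with h
        · simp only [hc]
          rw [hε p hp h, ← h, ww]; ring
        · simp
      rw [Finset.sum_congr rfl this, ← Finset.sum_filter, Finset.sum_const, nsmul_eq_mul, ← hNd]; ring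
    by_cases hm : nq v % 4 = 0
    · rw [hgen 1]
      · simp only [hF, hm, if_true]
        simp only [ne_eq, not_true, if_false, ite_self, sub_zero]
        nlinarith
      · intro p hp h
        rcases hcase p hp h with h | h
        · rw [h]; exact sg_even (RZ_even hm)
        · rw [h, mul_comm]; exact sg_even (RZ_even hm)
    · rw [hgen (-1)]
      · simp only [hF, hm, if_false]
        simp only [ne_eq, not_false_eq_true, if_true]
        split_ifs with hV
        · have hsA : √(nsq v) ∈ A := by
            simp only [hA, Finset.mem_image, Finset.mem_filter]
            exact ⟨v, ⟨hV, hm⟩, rfl⟩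
          have hge := SS_count_ge A hsA
          have : (L.card:ℝ) ≤ N := by
            rw [← hL] at hge
            rw [hN]; exact_mod_cast hge
          nlinarith
        · have : (0:ℝ) ≤ N := Nat.cast_nonneg _
          nlinarith
      · intro p hp h
        have hp' := Finset.mem_product.1 hp
        rcases hcase p hp h with h | h
        · rw [h]; exact sg_odd (hRR _ hp'.2) (RZ_odd (nq_mod v hm))
        · rw [h, mul_comm]; exact sg_odd (hRR _ hp'.1) (RZ_odd (nq_mod v hm))
  have hle := Summable.tsum_le_tsum hpt (summable_sum (fun p _ => hfs p)) (hFs.mul_left _)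
  rw [tsum_mul_left, hFv] at hle
  set Z := 2 * ∑' v, (if nq v % 4 = 0 then ww η v else 0) - ∑ v ∈ V, (if nq v % 4 ≠ 0 then ww η v else 0) with hZ
  have hpi := Real.pi_pos
  have k1 : -(L.card * Z) ≤ 4*π*C*L.card := by
    have : -(1/(2*π)) * (L.card * Z) ≤ 2*C*L.card := by
      refine le_trans ?_ key
      have : 0 < 1/(2*π) := by positivity
      nlinarith
    have h2 := mul_le_mul_of_nonneg_left this (by positivity : 0 ≤ 2*π)
    have e : 2*π*(-(1/(2*π)) * (L.card * Z)) = -(L.card*Z) := by field_simp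
    rw [e] at h2
    linarith
  have k2 : -Z ≤ 4*π*C := by
    by_contra hcon
    push Not at hcon
    nlinarith
  linarith

lemma A_W {C t₀ : ℝ} (hP : ∀ t, t₀ < t → PP t ≤ C * t) {η : ℝ} (hη : 0 < η) :
    ∑' v, ww η v ≤ 16*π*C := by
  have hs := ww_summable hη
  have hs1 : Summable (fun v => if nq v % 4 = 0 then ww η v else 0) := by
    refine Summable.of_nonneg_of_le (fun v => ?_) (fun v => ?_) hs
    · split_ifs
      · exact ww_nonneg _ _
      · rfl
    · split_ifs
      · rfl
      · exact ww_nonneg _ _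
  have hs2 : Summable (fun v => if nq v % 4 ≠ 0 then ww η v else 0) := by
    refine Summable.of_nonneg_of_le (fun v => ?_) (fun v => ?_) hs
    · split_ifs
      · exact ww_nonneg _ _
      · rfl
    · split_ifs
      · exact le_rfl
      · exact ww_nonneg _ _
  have h1 : ∑' v, (if nq v % 4 ≠ 0 then ww η v else 0) ≤ 4*π*C + 2 * ∑' v, (if nq v % 4 = 0 then ww η v else 0) := by
    apply hs2.tsum_le_of_sum_le
    intro V
    have := A_fin hP hη V
    linarith
  have h2 : ∑' v, ww η v = ∑' v, (if nq v % 4 ≠ 0 then ww η v else 0) + ∑' v, (if nq v % 4 = 0 then ww η v else 0) := by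
    rw [← hs2.tsum_add hs1]
    congr 1; ext v
    by_cases h : nq v % 4 = 0 <;> simp [h]
  have h3 : ∑' v, (if nq v % 4 = 0 then ww η v else 0) ≤ 1/4 * ∑' v, ww η v := by
    have hinj : Function.Injective (fun u : ℤ × ℤ => ((2*u.1, 2*u.2) : ℤ × ℤ)) := by
      intro u u' h
      have := Prod.mk.inj h
      ext <;> omega
    have hsupp : Function.support (fun v => if nq v % 4 = 0 then ww η v else 0) ⊆ Set.range (fun u : ℤ × ℤ => ((2*u.1, 2*u.2) : ℤ × ℤ)) := by
      intro v hv
      simp only [Function.mem_support] at hv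
      by_cases h : nq v % 4 = 0
      · obtain ⟨u, hu⟩ := nq_even v h
        exact ⟨u, hu.symm⟩
      · exact absurd (if_neg h) hv
    rw [← hinj.tsum_eq hsupp, ← tsum_mul_left]
    have hs3 := hs1.comp_injective hinj
    refine Summable.tsum_le_tsum (fun u => ?_) hs3 (hs.mul_left _)
    · have hw := ww_nonneg η u
      split_ifs
      · have e : nsq (2*u.1, 2*u.2) = 4 * nsq u := by simp only [nsq]; push_cast; ring
        have hn := nsq_nonneg u
        rw [ww, ww, e, div_mul_div_comm, one_mul]
        apply div_le_div_of_nonneg_right _ (by positivity)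
        apply Real.exp_le_exp.2
        nlinarith
      · positivity
  linarith

lemma not_summable_nsq : ¬ Summable (fun v : ℤ × ℤ => 1/nsq v) := by
  intro h
  have hinj : Function.Injective (fun x : (Σ a : ℕ, Fin (a+1)) => (((x.1:ℤ)+1, (x.2.1:ℤ)+1) : ℤ × ℤ)) := by
    rintro ⟨a, b⟩ ⟨a', b'⟩ h
    have := Prod.mk.inj h
    simp only at this
    have ha : a = a' := by omega
    subst ha
    have hb : b = b' := by ext; omega
    rw [hb]
  have h1 := h.comp_injective hinj
  have h2 := h1.sigma
  have h3 : Summable (fun a : ℕ => 1/2 * (1/((a:ℝ)+1))) := by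
    refine Summable.of_nonneg_of_le (fun a => by positivity) (fun a => ?_) h2
    rw [tsum_fintype]
    have : ∀ b ∈ (Finset.univ : Finset (Fin (a+1))), 1/(2*((a:ℝ)+1)^2) ≤ ((fun v : ℤ × ℤ => 1/nsq v) ∘ (fun x : (Σ a : ℕ, Fin (a+1)) => (((x.1:ℤ)+1, (x.2.1:ℤ)+1) : ℤ × ℤ))) ⟨a, b⟩ := by
      intro b _
      simp only [Function.comp, nsq]
      push_cast
      apply one_div_le_one_div_of_le (by positivity)
      have hb : (b.1:ℝ) ≤ a := by
        have := b.2
        exact_mod_cast (by omega : b.1 ≤ a)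
      have hb0 : (0:ℝ) ≤ b.1 := Nat.cast_nonneg _
      nlinarith
    have := Finset.sum_le_sum this
    refine le_trans (le_of_eq ?_) this
    simp
    field_simp
  have h4 := (summable_mul_left_iff (by norm_num : (1/2:ℝ) ≠ 0)).1 h3
  have h5 := (summable_nat_add_iff (f := fun n : ℕ => 1/(n:ℝ)) 1).1 (by simpa using h4)
  exact Real.not_summable_one_div_natCast h5

/-- `PP` is not bounded by a linear function -/
theorem PP_unbdd (C t₀ : ℝ) : ∃ t, t₀ < t ∧ C * t < PP t := by
  by_contra hcon
  push Not at hcon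
  apply not_summable_nsq
  refine summable_of_sum_le (c := 16*π*C) (fun v => by have := nsq_nonneg v; simp only [Pi.zero_apply]; positivity) ?_
  intro V
  have hlim : Filter.Tendsto (fun η : ℝ => ∑ v ∈ V, ww η v) (nhdsWithin 0 (Ioi 0)) (nhds (∑ v ∈ V, 1/nsq v)) := by
    have hc : Continuous (fun η : ℝ => ∑ v ∈ V, ww η v) := by unfold ww; fun_prop
    have := hc.tendsto 0
    simp only [ww, neg_zero, zero_mul, Real.exp_zero] at this
    exact this.mono_left nhdsWithin_le_nhds
  refine le_of_tendsto hlim ?_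
  filter_upwards [self_mem_nhdsWithin] with η hη
  exact ((ww_summable hη).sum_le_tsum V (fun v _ => ww_nonneg η v)).trans (A_W hcon hη)

end

section
open Real MeasureTheory Set

noncomputable def Psi (y m : ℝ) : ℝ := 2*√(y-m)*(√(2*y) - √(y+m))

lemma Psi_eq {y m : ℝ} (hy : 0 < y) (hm : 0 ≤ m) : Psi y m = 2 * (√(y-m)^3 * (1/(√(y+m)+√(2*y)))) := by
  unfold Psi
  rcases le_total m y with h | h
  · have h1 : √(y-m)^2 = y-m := Real.sq_sqrt (by linarith)
    have h2 : √(y+m)^2 = y+m := Real.sq_sqrt (by linarith)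
    have h3 : √(2*y)^2 = 2*y := Real.sq_sqrt (by linarith)
    have h4 : 0 < √(2*y) := Real.sqrt_pos.2 (by linarith)
    have h5 := Real.sqrt_nonneg (y+m)
    have h6 : √(y+m)+√(2*y) ≠ 0 := by positivity
    have h7 : √(2*y) - √(y+m) = √(y-m)^2 * (1/(√(y+m)+√(2*y))) := by
      rw [mul_one_div, eq_div_iff h6, h1]
      nlinarith
    rw [h7]; ring
  · rw [Real.sqrt_eq_zero_of_nonpos (by linarith : y-m ≤ 0)]; ring

lemma Psi_nonneg {y m : ℝ} (hy : 0 < y) (hm : 0 ≤ m) : 0 ≤ Psi y m := by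
  rw [Psi_eq hy hm]; positivity

lemma Psi_zero {y m : ℝ} (h : y ≤ m) : Psi y m = 0 := by
  unfold Psi
  rw [Real.sqrt_eq_zero_of_nonpos (by linarith : y-m ≤ 0)]; ring

lemma cube_mid {p q r : ℝ} (hp : 0 ≤ p) (hq : 0 ≤ q) (hr : 0 ≤ r) (h : 2*r^2 ≤ p^2+q^2) : 2*r^3 ≤ p^3+q^3 := by
  have h1 : 3*p^2*r ≤ 2*p^3+r^3 := by nlinarith [mul_nonneg hp (sq_nonneg (p-r)), mul_nonneg hr (sq_nonneg (p-r))]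
  have h2 : 3*q^2*r ≤ 2*q^3+r^3 := by nlinarith [mul_nonneg hq (sq_nonneg (q-r)), mul_nonneg hr (sq_nonneg (q-r))]
  nlinarith [mul_le_mul_of_nonneg_right h hr]

lemma Psi_mid {y a b c : ℝ} (hy : 0 < y) (ha : 0 ≤ a) (hb : 0 ≤ b) (hc : a + b = 2*c) : 2 * Psi y c ≤ Psi y a + Psi y b := by
  have hc0 : 0 ≤ c := by linarith
  rw [Psi_eq hy ha, Psi_eq hy hb, Psi_eq hy hc0]
  set Fa := √(y-a)^3 with hFa
  set Fb := √(y-b)^3 with hFb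
  set Fc := √(y-c)^3 with hFc
  set Da := √(y+a)+√(2*y) with hDa
  set Db := √(y+b)+√(2*y) with hDb
  set Dc := √(y+c)+√(2*y) with hDc
  have h4 : 0 < √(2*y) := Real.sqrt_pos.2 (by linarith)
  have pa : 0 < Da := by positivity
  have pb : 0 < Db := by positivity
  have pc : 0 < Dc := by positivity
  have sqx : ∀ x : ℝ, √x^2 = max x 0 := by
    intro x
    rcases le_total x 0 with h | h
    · rw [Real.sqrt_eq_zero_of_nonpos h, max_eq_right h]; norm_num
    · rw [Real.sq_sqrt h, max_eq_left h]
  have hF : 2*Fc ≤ Fa + Fb := by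
    apply cube_mid (Real.sqrt_nonneg _) (Real.sqrt_nonneg _) (Real.sqrt_nonneg _)
    rw [sqx, sqx, sqx]
    rcases le_total (y-c) 0 with h | h
    · rw [max_eq_right h]
      have := le_max_right (y-a) 0
      have := le_max_right (y-b) 0
      linarith
    · rw [max_eq_left h]
      have := le_max_left (y-a) 0
      have := le_max_left (y-b) 0
      linarith
  have hD : Da + Db ≤ 2*Dc := by
    have : √(y+a) + √(y+b) ≤ 2*√(y+c) := by
      have e1 := Real.sq_sqrt (show 0 ≤ y+a by linarith)
      have e2 := Real.sq_sqrt (show 0 ≤ y+b by linarith)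
      have e3 := Real.sq_sqrt (show 0 ≤ y+c by linarith)
      apply le_of_sq_le_sq _ (by positivity)
      nlinarith [sq_nonneg (√(y+a) - √(y+b))]
    linarith
  have hG : 2*(1/Dc) ≤ 1/Da + 1/Db := by
    rw [div_add_div _ _ pa.ne' pb.ne', mul_one_div, div_le_div_iff₀ pc (by positivity)]
    nlinarith [sq_nonneg (Da-Db), mul_le_mul_of_nonneg_left hD (add_pos pa pb).le]
  have mono : ∀ a b : ℝ, a ≤ b → √(y-b)^3 ≤ √(y-a)^3 ∧ 1/(√(y+b)+√(2*y)) ≤ 1/(√(y+a)+√(2*y)) := by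
    intro a b hab
    constructor
    · apply pow_le_pow_left₀ (Real.sqrt_nonneg _)
      exact Real.sqrt_le_sqrt (by linarith)
    · apply one_div_le_one_div_of_le (by positivity)
      have := Real.sqrt_le_sqrt (show y+a ≤ y+b by linarith)
      linarith
  have hch : 0 ≤ (Fa - Fb) * (1/Da - 1/Db) := by
    rcases le_total a b with h | h
    · obtain ⟨h1, h2⟩ := mono a b h
      exact mul_nonneg (by linarith) (by linarith)
    · obtain ⟨h1, h2⟩ := mono b a h
      exact mul_nonneg_of_nonpos_of_nonpos (by linarith) (by linarith)
  have nFc : 0 ≤ Fc := by positivity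
  have nGc : 0 ≤ 1/Dc := by positivity
  have hprod : (2*Fc)*(2*(1/Dc)) ≤ (Fa+Fb)*(1/Da+1/Db) := mul_le_mul hF hG (by positivity) (by linarith)
  nlinarith

lemma Psi_lip {y m h : ℝ} (hy : 0 < y) (hm : 0 ≤ m) (hh : 0 ≤ h) : Psi y m - 5*h ≤ Psi y (m+h) := by
  rcases le_total y m with hym | hym
  · rw [Psi_zero hym]
    have := Psi_nonneg hy (show 0 ≤ m+h by linarith)
    linarith
  rw [Psi_eq hy hm, Psi_eq hy (by linarith)]
  set s := √y with hs
  have s0 : 0 < s := Real.sqrt_pos.2 hy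
  have s2 : s^2 = y := Real.sq_sqrt hy.le
  set p := √(y-m) with hp
  set q := √(y-(m+h)) with hq
  have p0 : 0 ≤ p := Real.sqrt_nonneg _
  have q0 : 0 ≤ q := Real.sqrt_nonneg _
  have qp : q ≤ p := Real.sqrt_le_sqrt (by linarith)
  have ps : p ≤ s := Real.sqrt_le_sqrt (by linarith)
  have p2 : p^2 = y - m := Real.sq_sqrt (by linarith)
  have q2 : y - (m+h) ≤ q^2 := by
    rcases le_total (y-(m+h)) 0 with h | h
    · have := sq_nonneg q; linarith
    · rw [hq, Real.sq_sqrt h]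
  have hpq : p^2 - q^2 ≤ h := by linarith
  set α := √(y+m) with hα
  set β := √(y+(m+h)) with hβ
  have αs : s ≤ α := Real.sqrt_le_sqrt (by linarith)
  have αβ : α ≤ β := Real.sqrt_le_sqrt (by linarith)
  have α2 : α^2 = y+m := Real.sq_sqrt (by linarith)
  have β2 : β^2 = y+(m+h) := Real.sq_sqrt (by linarith)
  have c0 : 0 < √(2*y) := Real.sqrt_pos.2 (by linarith)
  set c := √(2*y)
  have hG : s^3 * (1/(α+c) - 1/(β+c)) ≤ h := by
    have a0 : 0 < α + c := by linarith
    have b0 : 0 < β + c := by linarith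
    have e : s^3 * (1/(α+c) - 1/(β+c)) = s^3*(β-α)/((α+c)*(β+c)) := by field_simp; ring
    rw [e, div_le_iff₀ (by positivity)]
    have h1 : s*(β-α) ≤ h := by nlinarith
    have h2 : s^2 ≤ (α+c)*(β+c) := by nlinarith
    calc s^3*(β-α) = s^2*(s*(β-α)) := by ring
      _ ≤ s^2*h := mul_le_mul_of_nonneg_left h1 (by positivity)
      _ ≤ ((α+c)*(β+c))*h := mul_le_mul_of_nonneg_right h2 hh
      _ = _ := by ring
  have hF : p^3 - q^3 ≤ 3/2*h*s := by
    have h1 : p^3 - q^3 ≤ 3/2*p*(p^2-q^2) := by nlinarith [mul_nonneg (sub_nonneg.2 qp) (sub_nonneg.2 qp), mul_nonneg p0 (mul_nonneg (sub_nonneg.2 qp) (sub_nonneg.2 qp)), mul_nonneg q0 (mul_nonneg (sub_nonneg.2 qp) (sub_nonneg.2 qp))]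
    have h2 : 0 ≤ p^2-q^2 := by nlinarith
    calc p^3 - q^3 ≤ 3/2*p*(p^2-q^2) := h1
      _ ≤ 3/2*s*(p^2-q^2) := by nlinarith
      _ ≤ 3/2*s*h := by nlinarith
      _ = _ := by ring
  have hGs : s * (1/(β+c)) ≤ 1 := by
    rw [mul_one_div, div_le_one (by linarith)]; linarith
  have hG1 : 0 ≤ 1/(β+c) := by have : 0 < β + c := by linarith
                               positivity
  have hGd : 0 ≤ 1/(α+c) - 1/(β+c) := by
    have := one_div_le_one_div_of_le (show 0 < α+c by linarith) (show α+c ≤ β+c by linarith)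
    linarith
  have hps : p^3 ≤ s^3 := pow_le_pow_left₀ p0 ps 3
  have k1 : p^3 * (1/(α+c) - 1/(β+c)) ≤ h := le_trans (mul_le_mul_of_nonneg_right hps hGd) hG
  have k2 : (p^3 - q^3) * (1/(β+c)) ≤ 3/2*h := by
    calc (p^3 - q^3) * (1/(β+c)) ≤ 3/2*h*s*(1/(β+c)) := mul_le_mul_of_nonneg_right hF hG1
      _ = 3/2*h*(s*(1/(β+c))) := by ring
      _ ≤ 3/2*h*1 := mul_le_mul_of_nonneg_left hGs (by linarith)
      _ = _ := by ring
  nlinarith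

lemma int_circ {y : ℝ} (hy : 0 < y) : ∫ m in (0:ℝ)..y, √(y^2 - m^2) = π*y^2/4 := by
  have h1 : ∫ x in (0:ℝ)..1, √(1 - x^2) = π/4 := by
    have h := integral_sqrt_one_sub_sq
    have hc : Continuous (fun x : ℝ => √(1-x^2)) := by fun_prop
    rw [← intervalIntegral.integral_add_adjacent_intervals (b := 0) (hc.intervalIntegrable _ _) (hc.intervalIntegrable _ _)] at h
    have h2 := intervalIntegral.integral_comp_neg (fun x : ℝ => √(1-x^2)) (a := 0) (b := 1)
    simp only [neg_sq, neg_zero] at h2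
    rw [← h2] at h
    linarith
  have h2 := intervalIntegral.integral_comp_mul_left (fun m => √(y^2 - m^2)) (a := 0) (b := 1) hy.ne'
  simp only [mul_zero, mul_one, smul_eq_mul] at h2
  have h3 : ∀ x : ℝ, √(y^2 - (y*x)^2) = y * √(1-x^2) := by
    intro x
    rw [show y^2 - (y*x)^2 = y^2*(1-x^2) by ring, Real.sqrt_mul (by positivity), Real.sqrt_sq hy.le]
  simp_rw [h3] at h2
  rw [intervalIntegral.integral_const_mul, h1] at h2
  field_simp at h2 ⊢
  linarith

lemma int_sqrt {y : ℝ} (hy : 0 < y) : ∫ m in (0:ℝ)..y, √(y - m) = 2/3*y*√y := by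
  rw [intervalIntegral.integral_comp_sub_left (fun x => √x) y]
  simp only [sub_self, sub_zero, Real.sqrt_eq_rpow]
  rw [integral_rpow (by norm_num)]
  rw [Real.zero_rpow (by norm_num), show (1/2+1:ℝ) = 1 + 1/2 by norm_num, Real.rpow_add hy, Real.rpow_one]
  ring

lemma int_Psi {y : ℝ} (hy : 0 < y) : ∫ m in Ioi (0:ℝ), Psi y m = (4*√2/3)*y^2 - π*y^2/2 := by
  have h1 : ∫ m in Ioi (0:ℝ), Psi y m = ∫ m in Ioc (0:ℝ) y, Psi y m := by
    refine setIntegral_eq_of_subset_of_forall_sdiff_eq_zero measurableSet_Ioi Ioc_subset_Ioi_self ?_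
    intro m hm
    apply Psi_zero
    by_contra hc
    push Not at hc
    exact hm.2 ⟨hm.1, hc.le⟩
  rw [h1, ← intervalIntegral.integral_of_le hy.le]
  have h2 : ∫ m in (0:ℝ)..y, Psi y m = ∫ m in (0:ℝ)..y, (2*√(2*y) * √(y-m) - 2 * √(y^2-m^2)) := by
    apply intervalIntegral.integral_congr
    intro m hm
    rw [uIcc_of_le hy.le] at hm
    simp only [Psi]
    rw [show y^2-m^2 = (y-m)*(y+m) by ring, Real.sqrt_mul (show 0 ≤ y-m by linarith [hm.2])]
    ring
  have c1 : Continuous (fun m : ℝ => 2*√(2*y) * √(y-m)) := by fun_prop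
  have c2 : Continuous (fun m : ℝ => 2 * √(y^2-m^2)) := by fun_prop
  rw [h2, intervalIntegral.integral_sub (c1.intervalIntegrable _ _) (c2.intervalIntegrable _ _), intervalIntegral.integral_const_mul, intervalIntegral.integral_const_mul, int_circ hy, int_sqrt hy, Real.sqrt_mul (by norm_num)]
  have := Real.mul_self_sqrt hy.le
  have e : 2*(√2*√y)*(2/3*y*√y) = 4*√2/3*y*(√y*√y) := by ring
  rw [e, this]; ring

lemma int_plane {y : ℝ} (hy : 0 < y) : ∫ u : ℝ × ℝ, Psi y (u.1^2+u.2^2) = π*((4*√2/3)*y^2 - π*y^2/2) := by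
  rw [← integral_comp_polarCoord_symm]
  have h1 : ∀ p : ℝ × ℝ, p.1 • Psi y ((polarCoord.symm p).1^2 + (polarCoord.symm p).2^2) = (fun r : ℝ => r * Psi y (r^2)) p.1 * (fun _ => (1:ℝ)) p.2 := by
    intro p
    have e : (polarCoord.symm p).1^2 + (polarCoord.symm p).2^2 = p.1^2 := by
      simp only [polarCoord_symm_apply]
      have := Real.cos_sq_add_sin_sq p.2
      linear_combination p.1^2 * this
    rw [e]; simp
  simp_rw [h1]
  rw [polarCoord_target, Measure.volume_eq_prod, setIntegral_prod_mul (fun r : ℝ => r * Psi y (r^2)) (fun _ => (1:ℝ))]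
  have h2 : ∫ r in Ioi (0:ℝ), r * Psi y (r^2) = 1/2 * ((4*√2/3)*y^2 - π*y^2/2) := by
    rw [← int_Psi hy, ← integral_comp_rpow_Ioi_of_pos (g := Psi y) (p := 2) (by norm_num), ← integral_const_mul]
    apply setIntegral_congr_fun measurableSet_Ioi
    intro r hr
    simp only [smul_eq_mul]
    rw [show (2:ℝ)-1 = 1 by norm_num, Real.rpow_one, Real.rpow_two]; ring
  rw [h2]
  simp [Real.pi_pos.le]
  ring

end

section
open Real MeasureTheory Set

/-- open unit box around a lattice point -/
def bx (v : ℤ × ℤ) : Set (ℝ × ℝ) := Ioo ((v.1:ℝ)-1/2) (v.1+1/2) ×ˢ Ioo ((v.2:ℝ)-1/2) (v.2+1/2)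

lemma bx_meas (v : ℤ × ℤ) : MeasurableSet (bx v) := measurableSet_Ioo.prod measurableSet_Ioo

lemma bx_vol (v : ℤ × ℤ) : volume (bx v) = 1 := by
  unfold bx
  rw [Measure.volume_eq_prod, Measure.prod_prod, Real.volume_Ioo, Real.volume_Ioo]
  rw [show ((v.1:ℝ)+1/2 - (v.1-1/2)) = 1 by ring, show ((v.2:ℝ)+1/2 - (v.2-1/2)) = 1 by ring]
  simp

lemma Ioo_disj {a b : ℤ} {x : ℝ} (h1 : x ∈ Ioo ((a:ℝ)-1/2) (a+1/2)) (h2 : x ∈ Ioo ((b:ℝ)-1/2) (b+1/2)) : a = b := by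
  have h3 : (a:ℝ) < b + 1 := by linarith [h1.1, h2.2]
  have h4 : (b:ℝ) < a + 1 := by linarith [h2.1, h1.2]
  have h3' : a < b + 1 := by exact_mod_cast h3
  have h4' : b < a + 1 := by exact_mod_cast h4
  omega

lemma bx_disj (s : Set (ℤ × ℤ)) : s.Pairwise (Function.onFun Disjoint bx) := by
  intro v _ w _ hvw
  rw [Function.onFun, Set.disjoint_left]
  rintro u ⟨h1, h2⟩ ⟨h3, h4⟩
  exact hvw (Prod.ext (Ioo_disj h1 h3) (Ioo_disj h2 h4))

lemma Psi_cont (y : ℝ) : Continuous (fun u : ℝ × ℝ => Psi y (u.1^2+u.2^2)) := by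
  unfold Psi; fun_prop

lemma Psi_integrable {y : ℝ} : Integrable (fun u : ℝ × ℝ => Psi y (u.1^2+u.2^2)) := by
  apply (Psi_cont y).integrable_of_hasCompactSupport
  apply HasCompactSupport.intro (isCompact_Icc (a := ((-√y, -√y) : ℝ × ℝ)) (b := (√y, √y)))
  intro u hu
  apply Psi_zero
  by_contra hc
  push Not at hc
  apply hu
  have h1 : |u.1| ≤ √y := Real.abs_le_sqrt (by nlinarith [sq_nonneg u.2])
  have h2 : |u.2| ≤ √y := Real.abs_le_sqrt (by nlinarith [sq_nonneg u.1])
  have h1' := abs_le.1 h1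
  have h2' := abs_le.1 h2
  exact ⟨⟨h1'.1, h2'.1⟩, ⟨h1'.2, h2'.2⟩⟩

lemma bx_refl (v : ℤ × ℤ) (g : ℝ × ℝ → ℝ) : ∫ u in bx v, g u = ∫ u in bx v, g ((2*v.1 - u.1, 2*v.2-u.2) : ℝ × ℝ) := by
  rw [← integral_indicator (bx_meas v), ← integral_indicator (bx_meas v)]
  rw [← integral_sub_left_eq_self (fun u => (bx v).indicator g u) volume ((2*v.1, 2*v.2) : ℝ × ℝ)]
  congr 1; ext u
  have e : ((2*(v.1:ℝ), 2*(v.2:ℝ)) : ℝ × ℝ) - u = (2*v.1 - u.1, 2*v.2-u.2) := rfl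
  rw [e]
  by_cases h : u ∈ bx v
  · rw [indicator_of_mem h, indicator_of_mem]
    obtain ⟨⟨h1, h2⟩, h3, h4⟩ := h
    exact ⟨⟨by simp only; linarith, by simp only; linarith⟩, by simp only; linarith, by simp only; linarith⟩
  · rw [indicator_of_notMem h, indicator_of_notMem]
    rintro ⟨⟨h1, h2⟩, h3, h4⟩
    simp only at h1 h2 h3 h4
    exact h ⟨⟨by linarith, by linarith⟩, by linarith, by linarith⟩

lemma bx_low {y : ℝ} (hy : 0 < y) (v : ℤ × ℤ) : Psi y (nsq v) - 5/2 ≤ ∫ u in bx v, Psi y (u.1^2+u.2^2) := by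
  have hi : IntegrableOn (fun u : ℝ × ℝ => Psi y (u.1^2+u.2^2)) (bx v) := Psi_integrable.integrableOn
  have hi2 : IntegrableOn (fun u : ℝ × ℝ => Psi y ((2*v.1 - u.1)^2+(2*v.2-u.2)^2)) (bx v) := by
    have := (Psi_integrable (y := y)).comp_sub_left ((2*v.1, 2*v.2) : ℝ × ℝ)
    exact this.integrableOn
  have hr := bx_refl v (fun u => Psi y (u.1^2+u.2^2))
  simp only at hr
  have hsum : 2 * ∫ u in bx v, Psi y (u.1^2+u.2^2) = ∫ u in bx v, (Psi y (u.1^2+u.2^2) + Psi y ((2*v.1 - u.1)^2+(2*v.2-u.2)^2)) := by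
    rw [integral_add hi hi2, ← hr]; ring
  have hfin : volume (bx v) ≠ ⊤ := by rw [bx_vol]; simp
  have hmono : ∫ u in bx v, (2*(Psi y (nsq v) - 5/2)) ≤ ∫ u in bx v, (Psi y (u.1^2+u.2^2) + Psi y ((2*v.1 - u.1)^2+(2*v.2-u.2)^2)) := by
    refine setIntegral_mono_on (integrableOn_const hfin) (hi.add hi2) (bx_meas v) ?_
    rintro u ⟨⟨h1, h2⟩, h3, h4⟩
    set h := (u.1-v.1)^2 + (u.2-v.2)^2 with hh
    have h0 : 0 ≤ h := by positivity
    have hle : h ≤ 1/2 := by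
      have a1 : (u.1-v.1)^2 ≤ 1/4 := by nlinarith
      have a2 : (u.2-v.2)^2 ≤ 1/4 := by nlinarith
      linarith
    have k1 := Psi_mid hy (a := u.1^2+u.2^2) (b := (2*v.1 - u.1)^2+(2*v.2-u.2)^2) (c := nsq v + h) (by positivity) (by positivity) (by rw [hh, nsq]; ring)
    have k2 := Psi_lip hy (nsq_nonneg v) h0
    linarith
  rw [setIntegral_const] at hmono
  have : volume.real (bx v) = 1 := by simp [Measure.real, bx_vol]
  rw [this, one_smul, ← hsum] at hmono
  linarith

lemma sum_Psi {y : ℝ} (hy : 0 < y) (U : Finset (ℤ × ℤ)) : ∑ v ∈ U, Psi y (nsq v) ≤ π*((4*√2/3)*y^2 - π*y^2/2) + 5/2 * U.card := by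
  have hi := Psi_integrable (y := y)
  have h1 : ∑ v ∈ U, (Psi y (nsq v) - 5/2) ≤ ∫ u : ℝ × ℝ, Psi y (u.1^2+u.2^2) := by
    calc ∑ v ∈ U, (Psi y (nsq v) - 5/2) ≤ ∑ v ∈ U, ∫ u in bx v, Psi y (u.1^2+u.2^2) := Finset.sum_le_sum fun v _ => bx_low hy v
      _ = ∫ u in ⋃ v ∈ U, bx v, Psi y (u.1^2+u.2^2) := (integral_biUnion_finset U (fun v _ => bx_meas v) (bx_disj _) (fun v _ => hi.integrableOn)).symm
      _ ≤ _ := setIntegral_le_integral hi (Filter.Eventually.of_forall fun u => Psi_nonneg hy (by positivity))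
  rw [int_plane hy, Finset.sum_sub_distrib, Finset.sum_const, nsmul_eq_mul] at h1
  linarith

lemma S_finite (x : ℝ) : {p : ℤ × ℤ × ℤ | (((p.1 : ℝ) ^ 2 + (p.2.1 : ℝ) ^ 2) ^ 2 + (p.2.2 : ℝ) ^ 2) < x}.Finite := by
  have h := ((nsq_finite (x+1)).prod (nsq_finite x)).image (fun q : (ℤ × ℤ) × (ℤ × ℤ) => ((q.1.1, q.1.2, q.2.1) : ℤ × ℤ × ℤ))
  refine h.subset ?_
  rintro ⟨a, b, w⟩ hp
  simp only [mem_ofPred_eq] at hp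
  refine ⟨((a, b), (w, 0)), ⟨?_, ?_⟩, rfl⟩
  · simp only [mem_ofPred_eq, nsq]
    nlinarith [sq_nonneg ((a:ℝ)^2+(b:ℝ)^2-1), sq_nonneg (w:ℝ), sq_nonneg (a:ℝ), sq_nonneg (b:ℝ)]
  · simp only [mem_ofPred_eq, nsq]
    push_cast
    nlinarith [sq_nonneg ((a:ℝ)^2+(b:ℝ)^2)]

lemma S_low {y : ℝ} (U : Finset (ℤ × ℤ)) (hU : ∀ v ∈ U, nsq v < y) :
    ∑ v ∈ U, (2*√(y^2 - nsq v^2) - 1) ≤ S (y^2) := by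
  set I : ℤ × ℤ → Finset ℤ := fun v => Finset.Ioo (-⌈√(y^2 - nsq v^2)⌉) ⌈√(y^2 - nsq v^2)⌉ with hI
  have hcard : ∀ v ∈ U, 2*√(y^2 - nsq v^2) - 1 ≤ ((I v).card : ℝ) := by
    intro v _
    simp only [hI, Int.card_Ioo]
    have h1 := Int.le_ceil (√(y^2 - nsq v^2))
    set z := ⌈√(y^2 - nsq v^2)⌉
    have h2 : (z - -z - 1 : ℤ) ≤ ((z - -z - 1).toNat : ℤ) := Int.self_le_toNat _
    have h3 : ((z - -z - 1 : ℤ):ℝ) ≤ (((z - -z - 1).toNat : ℕ) : ℝ) := by exact_mod_cast h2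
    push_cast at h3
    linarith
  refine (Finset.sum_le_sum hcard).trans ?_
  rw [← Nat.cast_sum, ← Finset.card_sigma]
  have hinj : Function.Injective (fun q : (Σ _ : ℤ × ℤ, ℤ) => ((q.1.1, q.1.2, q.2) : ℤ × ℤ × ℤ)) := by
    rintro ⟨⟨a, b⟩, w⟩ ⟨⟨a', b'⟩, w'⟩ h
    simp only [Prod.mk.injEq] at h
    obtain ⟨rfl, rfl, rfl⟩ := h
    rfl
  rw [← Finset.card_image_of_injective _ hinj, ← Set.ncard_coe_finset]
  have : ((Finset.image (fun q : (Σ _ : ℤ × ℤ, ℤ) => ((q.1.1, q.1.2, q.2) : ℤ × ℤ × ℤ)) (U.sigma I) : Finset _) : Set (ℤ × ℤ × ℤ)) ⊆ {p : ℤ × ℤ × ℤ | (((p.1 : ℝ) ^ 2 + (p.2.1 : ℝ) ^ 2) ^ 2 + (p.2.2 : ℝ) ^ 2) < y^2} := by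
    intro p hp
    rw [Finset.mem_coe, Finset.mem_image] at hp
    obtain ⟨⟨v, w⟩, hq, rfl⟩ := hp
    rw [Finset.mem_sigma] at hq
    obtain ⟨hv, hw⟩ := hq
    simp only [hI, Finset.mem_Ioo] at hw
    simp only [mem_ofPred_eq]
    have hny := hU v hv
    have hn := nsq_nonneg v
    have hpos : 0 ≤ y^2 - nsq v^2 := by nlinarith
    have w1 : (w:ℝ) < √(y^2 - nsq v^2) := Int.lt_ceil.1 hw.2
    have w2 : -(w:ℝ) < √(y^2 - nsq v^2) := by
      have : -w < ⌈√(y^2 - nsq v^2)⌉ := by omega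
      have := Int.lt_ceil.1 this
      push_cast at this; exact this
    have hsq := Real.sq_sqrt hpos
    have : (w:ℝ)^2 < √(y^2 - nsq v^2)^2 := by
      apply sq_lt_sq'
      · linarith
      · exact w1
    unfold nsq at *
    linarith
  have hle := Set.ncard_le_ncard this (S_finite _)
  exact Nat.cast_le.2 hle

lemma U_card {t : ℝ} (ht : 1 ≤ t) (U : Finset (ℤ × ℤ)) (hU : ∀ v ∈ U, nsq v < t^2) : (U.card : ℝ) ≤ 9*t^2 := by
  have hsub : U ⊆ Finset.Icc (-⌊t⌋) ⌊t⌋ ×ˢ Finset.Icc (-⌊t⌋) ⌊t⌋ := by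
    intro v hv
    have h := hU v hv
    unfold nsq at h
    have h1 : |(v.1:ℝ)| ≤ t := abs_le_of_sq_le_sq (by nlinarith [sq_nonneg (v.2:ℝ)]) (by linarith)
    have h2 : |(v.2:ℝ)| ≤ t := abs_le_of_sq_le_sq (by nlinarith [sq_nonneg (v.1:ℝ)]) (by linarith)
    have h1' : |v.1| ≤ ⌊t⌋ := Int.le_floor.2 (by push_cast; exact h1)
    have h2' : |v.2| ≤ ⌊t⌋ := Int.le_floor.2 (by push_cast; exact h2)
    simp only [Finset.mem_product, Finset.mem_Icc]
    exact ⟨abs_le.1 h1', abs_le.1 h2'⟩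
  have h := Finset.card_le_card hsub
  rw [Finset.card_product, Int.card_Icc] at h
  have hf0 : 0 ≤ ⌊t⌋ := Int.floor_nonneg.2 (by linarith)
  have hf := Int.floor_le t
  have e : (((⌊t⌋ + 1 - -⌊t⌋).toNat : ℕ) : ℝ) = 2*⌊t⌋+1 := by
    have : (((⌊t⌋ + 1 - -⌊t⌋).toNat : ℕ) : ℤ) = 2*⌊t⌋+1 := by omega
    exact_mod_cast this
  have h' : (U.card:ℝ) ≤ (((⌊t⌋ + 1 - -⌊t⌋).toNat : ℕ) : ℝ) * (((⌊t⌋ + 1 - -⌊t⌋).toNat : ℕ) : ℝ) := by exact_mod_cast h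
  rw [e] at h'
  have hf0' : (0:ℝ) ≤ ⌊t⌋ := by exact_mod_cast hf0
  nlinarith

lemma E_low {t : ℝ} (ht : 1 ≤ t) : 2*√2*t*PP t - 32*t^2 ≤ E (t^4) := by
  set U := (nsq_finite (t^2)).toFinset with hUd
  have hU : ∀ v ∈ U, nsq v < t^2 := by
    intro v hv; simpa [hUd] using hv
  have hy : 0 < t^2 := by positivity
  have h1 := S_low U hU
  have h2 := sum_Psi hy U
  have h3 := U_card ht U hU
  have hN : NN t = ∑ v ∈ U, √(t^2 - nsq v) := by
    unfold NN
    apply tsum_eq_sum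
    intro v hv
    apply Real.sqrt_eq_zero_of_nonpos
    have : ¬ nsq v < t^2 := by simpa [hUd] using hv
    linarith
  have e : ∑ v ∈ U, (2*√((t^2)^2 - nsq v^2) - 1) = 2*√2*t*NN t - ∑ v ∈ U, Psi (t^2) (nsq v) - U.card := by
    rw [hN, Finset.mul_sum, ← Finset.sum_sub_distrib, Finset.sum_sub_distrib, Finset.sum_const, nsmul_eq_mul, mul_one]
    congr 1
    apply Finset.sum_congr rfl
    intro v hv
    have := hU v hv
    unfold Psi
    rw [show (t^2)^2 - nsq v^2 = (t^2 - nsq v)*(t^2 + nsq v) by ring, Real.sqrt_mul (show 0 ≤ t^2 - nsq v by linarith), Real.sqrt_mul (show (0:ℝ) ≤ 2 by norm_num) (t^2), Real.sqrt_sq (by linarith)]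
    ring
  rw [e] at h1
  unfold E PP
  rw [show t^4 = (t^2)^2 by ring]
  have e2 : 2*√2*t*(NN t - 2*π/3*t^3) = 2*√2*t*NN t - π*(4*√2/3*(t^2)^2) := by ring
  rw [e2]
  nlinarith

end

/-- limsup_{x→∞} E(x)/x^{1/2} = +∞: for every real `C` there exist arbitrarily
large `x` with `E(x) > C·x^{1/2}`. -/
theorem limsup_E_eq_top :
    ∀ C : ℝ, ∀ X : ℝ, ∃ x : ℝ, X < x ∧ C * x ^ ((1 : ℝ) / 2) < E x := by
  intro C X
  obtain ⟨t, ht, hP⟩ := PP_unbdd (|C|+32) (1+|X|)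
  have hX := abs_nonneg X
  have ht1 : 1 ≤ t := by linarith
  refine ⟨t^4, ?_, ?_⟩
  · have h1 : X < t := by have := le_abs_self X; linarith
    have h2 : t ≤ t^4 := le_self_pow₀ ht1 (by norm_num)
    linarith
  · have h1 := E_low ht1
    have h2 : (t^4:ℝ) ^ ((1:ℝ)/2) = t^2 := by
      rw [← Real.sqrt_eq_rpow, show t^4 = (t^2)^2 by ring, Real.sqrt_sq (by positivity)]
    rw [h2]
    have h3 : 1 ≤ √2 := Real.one_le_sqrt.2 (by norm_num)
    have h4 : 0 < (|C|+32)*t := by positivity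
    have h5 : (|C|+32)*t^2 ≤ t * PP t := by nlinarith
    have h6 : t * PP t ≤ 2*√2*t*PP t := by
      have : 0 ≤ t * PP t := by nlinarith
      nlinarith
    have h7 : C ≤ |C| := le_abs_self C
    have h8 : 0 < t^2 := by positivity
    have h9 : (|C|+32)*t^2 < t * PP t := by nlinarith
    nlinarith
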